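/- arXiv:1808.05435 — 2 statements merged into one kernel-verified Lean document; each statement's English description precedes it below -/
import Mathlib

section
/- Let A be a complex semisimple unital Banach algebra, let N be a nonempty open subset of A, and let a, b ∈ A. If σ(bx) is finite for each x ∈ N and σ'(ax) ⊆ σ'(bx) for each x ∈ N, then a commutes with b and, either a = 0, or there exist rank one elements a₁, …, aₙ of A and an integer k ≤ n such that a = a₁ + ⋯ + a_k and b = a₁ + ⋯ + aₙ. Moreover a is orthogonal to b − a, i.e. a(b − a) = (b − a)a = 0. -/
open Complex

noncomputable section

/-- The nonzero spectrum `σ'(x) = σ(x) \ {0}` of an element of a complex algebra. -/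
def nzSpec {A : Type*} [Ring A] [Algebra ℂ A] (x : A) : Set ℂ :=
  spectrum ℂ x \ {0}

/-- The spectral rank of an element: `rank a = sup_{x ∈ A} #σ'(xa)`, valued in `ℕ∞`. -/
noncomputable def srank {A : Type*} [Ring A] [Algebra ℂ A] (a : A) : ℕ∞ :=
  ⨆ x : A, (nzSpec (x * a)).encard

/-- The socle of `A`: the set of finite-rank elements. -/
def socle (A : Type*) [Ring A] [Algebra ℂ A] : Set A :=
  {a : A | srank a ≠ ⊤}

/-- `A` is (Jacobson) semisimple: its Jacobson radical is `{0}`. -/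
def JacobsonSemisimple (A : Type*) [Ring A] : Prop :=
  TwoSidedIdeal.jacobson (⊥ : TwoSidedIdeal A) = ⊥

/-- `Soc A` is a minimal two-sided ideal: it is a nonzero two-sided ideal containing
no two-sided ideals other than `{0}` and itself. -/
def SocleIsMinimalTwoSidedIdeal (A : Type*) [Ring A] [Algebra ℂ A] : Prop :=
  ∃ I : TwoSidedIdeal A, (I : Set A) = socle A ∧ I ≠ ⊥ ∧
    ∀ J : TwoSidedIdeal A, J ≤ I → J = ⊥ ∨ J = I

/-- `A` is a prime algebra: all nonzero two-sided ideals `I, J` satisfy `IJ ≠ {0}`. -/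
def IsPrimeAlgebra (A : Type*) [Ring A] : Prop :=
  ∀ I J : TwoSidedIdeal A, I ≠ ⊥ → J ≠ ⊥ → ∃ x ∈ I, ∃ y ∈ J, x * y ≠ 0

/-- The left annihilator of the socle equals `{0}`. -/
def LeftAnnSocleTrivial (A : Type*) [Ring A] [Algebra ℂ A] : Prop :=
  {x : A | ∀ y ∈ socle A, x * y = 0} = {0}

/-!
By Newburgh's theorem `x ↦ #σ'(bx)` is lower semicontinuous, so by Baire's theorem it has a local
maximum at some `x ∈ N`. There each nonzero spectral value `l` of `bx` has an idempotent `p`, and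
elements of the corner `pAp` have one-point spectra: near `lp` by maximality, hence everywhere by
the maximum principle. Semisimplicity then gives `pAp = ℂp`, so that the idempotents `pᵢ` belonging
to the nonzero spectral values `lᵢ` satisfy `b x pᵢ = lᵢ pᵢ`. Put `P = ∑ pᵢ`. Maximality also yields
`P b = b`, hence `bx = ∑ lᵢ pᵢ`, and `b w = P` for `w = x ∑ lᵢ⁻¹ pᵢ`.

If `by = 0`, then `σ'(ax + μ ayz) ⊆ σ'(bx)` for every `z` and small `μ`. A line along which the
spectrum stays in a finite set points in a quasinilpotent direction, so `ay = 0` by semisimplicity.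
Likewise `yb = 0` implies `ya = 0`, and with `α = a w` it follows that `P a = a = α b`. The
hypothesis becomes `σ'(αu) ⊆ σ'(Pu)` for `u` near `∑ lᵢ pᵢ`. Moving `∑ lᵢ pᵢ` within its conjugacy
class shows that `α` commutes with every `pᵢ` and with `PAP`, and moving its eigenvalues shows that
`α pᵢ ∈ {0, pᵢ}`. So `α` is a partial sum of the `pᵢ`, and `a = α b` and `b = P b` are sums of the
rank one elements `pᵢ b`.
-/

open Filter Metric Polynomial Topology
open scoped ENNReal NNReal

section Quasinilpotent

variable {A : Type*} [Ring A] [Algebra ℂ A]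

/-- An element is quasinilpotent when its spectrum contains no nonzero scalar. Membership of `0` is
not required, so that the elements of the zero algebra are quasinilpotent. -/
def IsQuasinilpotent (x : A) : Prop :=
  spectrum ℂ x ⊆ {0}

namespace IsQuasinilpotent

lemma spectralRadius_eq_zero {x : A} (hx : IsQuasinilpotent x) : spectralRadius ℂ x = 0 := by
  refine le_antisymm (iSup₂_le fun z hz => ?_) zero_le
  simp [show z = 0 from hx hz]

lemma of_spectralRadius_eq_zero {x : A} (hx : spectralRadius ℂ x = 0) : IsQuasinilpotent x := by
  intro z hz
  have h : (‖z‖₊ : ℝ≥0∞) ≤ 0 := hx ▸ le_iSup₂ (f := fun (k : ℂ) _ => (‖k‖₊ : ℝ≥0∞)) z hz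
  simpa using h

lemma isUnit_algebraMap_sub {x : A} (hx : IsQuasinilpotent x) {z : ℂ} (hz : z ≠ 0) :
    IsUnit (algebraMap ℂ A z - x) :=
  spectrum.notMem_iff.mp fun h => hz (hx h)

lemma isUnit_one_sub {x : A} (hx : IsQuasinilpotent x) : IsUnit (1 - x) := by
  simpa using hx.isUnit_algebraMap_sub one_ne_zero

lemma mul_comm {x y : A} (h : IsQuasinilpotent (x * y)) : IsQuasinilpotent (y * x) := by
  rw [IsQuasinilpotent, ← Set.sdiff_eq_empty] at h ⊢
  rwa [spectrum.nonzero_mul_comm]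

lemma of_pow {x : A} {n : ℕ} (h : IsQuasinilpotent (x ^ n)) : IsQuasinilpotent x :=
  fun _ hz => eq_zero_of_pow_eq_zero (h (spectrum.pow_mem_pow x n hz))

lemma eq_zero_of_isIdempotentElem {e : A} (h : IsQuasinilpotent e) (he : IsIdempotentElem e) :
    e = 0 :=
  h.isUnit_one_sub.mul_right_eq_zero.mp he.one_sub_mul_self

section BanachAlgebra

variable {A : Type*} [NormedRing A] [NormedAlgebra ℂ A] [CompleteSpace A]

lemma eventually_norm_pow_le {x : A} (hx : IsQuasinilpotent x) {ε : ℝ} (hε : 0 < ε) :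
    ∀ᶠ n : ℕ in atTop, ‖x ^ n‖ ≤ ε ^ n := by
  have h := spectrum.pow_norm_pow_one_div_tendsto_nhds_spectralRadius x
  rw [hx.spectralRadius_eq_zero] at h
  filter_upwards [h.eventually_lt_const (ENNReal.ofReal_pos.mpr hε), eventually_gt_atTop 0]
    with n hn hn0
  have hroot : ‖x ^ n‖ ^ (1 / n : ℝ) ≤ ε := ((ENNReal.ofReal_lt_ofReal_iff hε).mp hn).le
  rwa [one_div, Real.rpow_inv_le_iff_of_pos (norm_nonneg _) hε.le (by positivity),
    Real.rpow_natCast] at hroot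

lemma of_forall_eventually_norm_pow_le {x : A}
    (h : ∀ ε > (0 : ℝ), ∀ᶠ n : ℕ in atTop, ‖x ^ n‖ ≤ ε ^ n) : IsQuasinilpotent x := by
  refine of_spectralRadius_eq_zero (le_antisymm ?_ zero_le)
  refine ENNReal.le_of_forall_pos_le_add fun ε hε _ => ?_
  rw [zero_add]
  refine le_of_tendsto (spectrum.pow_norm_pow_one_div_tendsto_nhds_spectralRadius x) ?_
  filter_upwards [h ε hε, eventually_gt_atTop 0] with n hn hn0
  rw [← ENNReal.ofReal_coe_nnreal]
  refine ENNReal.ofReal_le_ofReal ?_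
  rwa [one_div, Real.rpow_inv_le_iff_of_pos (norm_nonneg _) ε.coe_nonneg (by positivity),
    Real.rpow_natCast]

lemma mul_of_commute {x y : A} (hx : IsQuasinilpotent x) (hc : Commute x y) :
    IsQuasinilpotent (x * y) := by
  refine of_forall_eventually_norm_pow_le fun ε hε => ?_
  have hy : 0 < ‖y‖ + 1 := by positivity
  filter_upwards [hx.eventually_norm_pow_le (div_pos hε hy), eventually_gt_atTop 0] with n hn hn0
  calc ‖(x * y) ^ n‖ ≤ ‖x ^ n‖ * ‖y ^ n‖ := by rw [hc.mul_pow]; exact norm_mul_le _ _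
    _ ≤ (ε / (‖y‖ + 1)) ^ n * (‖y‖ + 1) ^ n := by
        gcongr
        exact (norm_pow_le' y hn0).trans (by gcongr; linarith)
    _ = ε ^ n := by rw [← mul_pow, div_mul_cancel₀ _ hy.ne']

lemma smul {x : A} (hx : IsQuasinilpotent x) (c : ℂ) : IsQuasinilpotent (c • x) := by
  rw [Algebra.smul_def, Algebra.commutes]
  exact hx.mul_of_commute (Algebra.commutes c x).symm

lemma neg {x : A} (hx : IsQuasinilpotent x) : IsQuasinilpotent (-x) := by
  simpa using hx.smul (-1)

end BanachAlgebra

end IsQuasinilpotent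

lemma isQuasinilpotent_sub_algebraMap_iff {x : A} {c : ℂ} :
    IsQuasinilpotent (x - algebraMap ℂ A c) ↔ spectrum ℂ x ⊆ {c} := by
  rw [IsQuasinilpotent, ← spectrum.sub_singleton_eq, Set.sub_singleton, Set.image_subset_iff]
  exact forall₂_congr fun _ _ => sub_eq_zero

lemma JacobsonSemisimple.eq_zero_of_forall_isQuasinilpotent_mul (hss : JacobsonSemisimple A)
    {v : A} (hv : ∀ y, IsQuasinilpotent (v * y)) : v = 0 := by
  rw [← TwoSidedIdeal.mem_bot, ← hss, TwoSidedIdeal.mem_jacobson_iff]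
  intro y
  obtain ⟨u, hu⟩ := (hv (-y)).mul_comm.isUnit_one_sub
  refine ⟨↑u⁻¹, ?_⟩
  have h : (↑u⁻¹ : A) * (1 + y * v) = 1 := by
    rw [show 1 + y * v = (u : A) by rw [hu]; noncomm_ring, u.inv_mul]
  rw [TwoSidedIdeal.mem_bot, ← h]
  noncomm_ring

lemma isQuasinilpotent_aeval {A : Type*} [NormedRing A] [NormedAlgebra ℂ A] [CompleteSpace A]
    {x : A} {p : ℂ[X]} (h : ∀ z ∈ spectrum ℂ x, p.eval z = 0) :
    IsQuasinilpotent (aeval x p) := by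
  cases subsingleton_or_nontrivial A
  · simp [IsQuasinilpotent]
  rw [IsQuasinilpotent, spectrum.map_polynomial_aeval]
  rintro _ ⟨z, hz, rfl⟩
  exact h z hz

lemma tendsto_add_smul_nhds_zero {E : Type*} [TopologicalSpace E] [AddCommMonoid E]
    [ContinuousAdd E] [Module ℂ E] [ContinuousSMul ℂ E] (u v : E) :
    Tendsto (fun z : ℂ => u + z • v) (𝓝 0) (𝓝 u) :=
  Continuous.tendsto' (by fun_prop) _ _ (by rw [zero_smul, add_zero])

end Quasinilpotent

section MaximumPrinciple

lemma norm_mul_norm_le_of_forall_mem_sphere {E F : Type*} [NormedAddCommGroup E] [NormedSpace ℂ E]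
    [NormedAddCommGroup F] [NormedSpace ℂ F] {f : ℂ → E} {g : ℂ → F} (hf : Differentiable ℂ f)
    (hg : Differentiable ℂ g) {c : ℂ} {R C : ℝ} (hR : 0 < R)
    (h : ∀ z ∈ sphere c R, ‖f z‖ * ‖g z‖ ≤ C) : ‖f c‖ * ‖g c‖ ≤ C := by
  obtain ⟨φ, hφ, hφf⟩ := exists_dual_vector'' ℂ (f c)
  obtain ⟨ψ, hψ, hψg⟩ := exists_dual_vector'' ℂ (g c)
  have hd : Differentiable ℂ fun z => φ (f z) * ψ (g z) :=
    (φ.differentiable.comp hf).mul (ψ.differentiable.comp hg)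
  have hmax : ‖φ (f c) * ψ (g c)‖ ≤ C := by
    refine Complex.norm_le_of_forall_mem_frontier_norm_le isBounded_ball hd.diffContOnCl
      (fun z hz => ?_) (subset_closure (mem_ball_self hR))
    rw [frontier_ball _ hR.ne'] at hz
    calc ‖φ (f z) * ψ (g z)‖ = ‖φ (f z)‖ * ‖ψ (g z)‖ := norm_mul _ _
      _ ≤ ‖f z‖ * ‖g z‖ := by
          gcongr
          · exact φ.le_of_opNorm_le_of_le hφ le_rfl |>.trans_eq (one_mul _)
          · exact ψ.le_of_opNorm_le_of_le hψ le_rfl |>.trans_eq (one_mul _)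
      _ ≤ C := h z hz
  simpa [hφf, hψg] using hmax

variable {A : Type*} [NormedRing A] [NormedAlgebra ℂ A]

lemma differentiable_aeval_prod_X_sub_C {ι : Type*} (s : Finset ι) {x : ℂ → A} {r : ι → ℂ → ℂ}
    (hx : Differentiable ℂ x) (hr : ∀ i, Differentiable ℂ (r i)) :
    Differentiable ℂ fun μ => aeval (x μ) (∏ i ∈ s, (X - C (r i μ))) := by
  classical
  induction s using Finset.induction_on with
  | empty => simp
  | insert i s his ih =>
    simp only [Finset.prod_insert his, map_mul, map_sub, aeval_X, aeval_C,
      Algebra.algebraMap_eq_smul_one]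
    exact (hx.sub ((hr i).smul_const 1)).mul ih

variable [CompleteSpace A]

lemma spectralRadius_ne_top (x : A) : spectralRadius ℂ x ≠ ∞ := by
  cases subsingleton_or_nontrivial A
  · simp
  · obtain ⟨z, -, hz⟩ := spectrum.exists_nnnorm_eq_spectralRadius x
    exact hz ▸ ENNReal.coe_ne_top

variable {B : Type*} [NormedRing B] [NormedAlgebra ℂ B] [CompleteSpace B]

lemma tendsto_nnnorm_pow_mul_nnnorm_pow_rpow (x : A) (y : B) :
    Tendsto (fun k : ℕ => (‖x ^ 2 ^ k‖₊ * ‖y ^ 2 ^ k‖₊ : ℝ≥0∞) ^ (1 / (2 ^ k : ℕ) : ℝ)) atTop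
      (𝓝 (spectralRadius ℂ x * spectralRadius ℂ y)) := by
  have h := (ENNReal.Tendsto.mul (spectrum.pow_nnnorm_pow_one_div_tendsto_nhds_spectralRadius x)
    (.inr (spectralRadius_ne_top y))
    (spectrum.pow_nnnorm_pow_one_div_tendsto_nhds_spectralRadius y)
    (.inr (spectralRadius_ne_top x))).comp (tendsto_pow_atTop_atTop_of_one_lt one_lt_two)
  refine h.congr fun k => ?_
  exact (ENNReal.mul_rpow_of_nonneg _ _ (by positivity)).symm

/-- The powers are taken along `2 ^ k` because the open sets on which the `k`-th bound holds then
increase with `k`, so that one bound holds on the whole compact circle. -/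
lemma exists_forall_mem_sphere_norm_pow_mul_norm_pow_lt {f : ℂ → A} {g : ℂ → B}
    (hf : Continuous f) (hg : Continuous g) {c : ℂ} {R : ℝ} {C : ℝ≥0}
    (h : ∀ z ∈ sphere c R, spectralRadius ℂ (f z) * spectralRadius ℂ (g z) < C) :
    ∃ k₀, ∀ k ≥ k₀, ∀ z ∈ sphere c R, ‖f z ^ 2 ^ k‖₊ * ‖g z ^ 2 ^ k‖₊ < C ^ 2 ^ k := by
  set U : ℕ → Set ℂ := fun k => {z | ‖f z ^ 2 ^ k‖₊ * ‖g z ^ 2 ^ k‖₊ < C ^ 2 ^ k}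
  have hopen : ∀ k, IsOpen (U k) := fun k => isOpen_lt (by fun_prop) continuous_const
  have hmono : Monotone U := monotone_nat_of_le_succ fun k z hz => by
    simp only [U, Set.mem_ofPred_eq, pow_succ 2, pow_mul, pow_two (_ ^ 2 ^ _)] at hz ⊢
    calc ‖f z ^ 2 ^ k * f z ^ 2 ^ k‖₊ * ‖g z ^ 2 ^ k * g z ^ 2 ^ k‖₊
        ≤ (‖f z ^ 2 ^ k‖₊ * ‖f z ^ 2 ^ k‖₊) * (‖g z ^ 2 ^ k‖₊ * ‖g z ^ 2 ^ k‖₊) := by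
          gcongr <;> exact nnnorm_mul_le _ _
      _ = (‖f z ^ 2 ^ k‖₊ * ‖g z ^ 2 ^ k‖₊) * (‖f z ^ 2 ^ k‖₊ * ‖g z ^ 2 ^ k‖₊) := by ring
      _ < C ^ 2 ^ k * C ^ 2 ^ k := by gcongr
  have hcover : sphere c R ⊆ ⋃ k, U k := fun z hz => by
    obtain ⟨k, hk⟩ := ((tendsto_nnnorm_pow_mul_nnnorm_pow_rpow (f z) (g z)).eventually_lt_const
      (h z hz)).exists
    rw [one_div, ENNReal.rpow_inv_lt_iff (by positivity), ENNReal.rpow_natCast] at hk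
    exact Set.mem_iUnion.mpr ⟨k, by exact_mod_cast hk⟩
  obtain ⟨k₀, hk₀⟩ :=
    (isCompact_sphere c R).elim_directed_cover U hopen hcover hmono.directed_le
  exact ⟨k₀, fun k hk z hz => hmono hk (hk₀ hz)⟩

theorem spectralRadius_mul_spectralRadius_le_of_forall_mem_sphere {f : ℂ → A} {g : ℂ → B}
    (hf : Differentiable ℂ f) (hg : Differentiable ℂ g) {c : ℂ} {R : ℝ} (hR : 0 < R) {C : ℝ≥0}
    (h : ∀ z ∈ sphere c R, spectralRadius ℂ (f z) * spectralRadius ℂ (g z) ≤ C) :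
    spectralRadius ℂ (f c) * spectralRadius ℂ (g c) ≤ C := by
  refine ENNReal.le_of_forall_pos_le_add fun ε hε _ => ?_
  rw [← ENNReal.coe_add]
  obtain ⟨k₀, hk₀⟩ := exists_forall_mem_sphere_norm_pow_mul_norm_pow_lt hf.continuous hg.continuous
    (C := C + ε) fun z hz => (h z hz).trans_lt (by exact_mod_cast lt_add_of_pos_right C hε)
  refine le_of_tendsto (tendsto_nnnorm_pow_mul_nnnorm_pow_rpow (f c) (g c)) ?_
  filter_upwards [eventually_ge_atTop k₀] with k hk
  have hc : ‖f c ^ 2 ^ k‖₊ * ‖g c ^ 2 ^ k‖₊ ≤ (C + ε) ^ 2 ^ k := by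
    exact_mod_cast norm_mul_norm_le_of_forall_mem_sphere (hf.pow _) (hg.pow _) hR
      fun z hz => by exact_mod_cast (hk₀ k hk z hz).le
  rw [one_div, ENNReal.rpow_inv_le_iff (by positivity), ENNReal.rpow_natCast]
  exact_mod_cast hc

lemma IsQuasinilpotent.of_forall_mem_sphere {f : ℂ → A} (hf : Differentiable ℂ f) {c : ℂ} {R : ℝ}
    (hR : 0 < R) (h : ∀ z ∈ sphere c R, IsQuasinilpotent (f z)) : IsQuasinilpotent (f c) := by
  have := spectralRadius_mul_spectralRadius_le_of_forall_mem_sphere hf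
    (differentiable_const (1 : ℂ)) (c := c) hR (C := 0) fun z hz => by
      simp [(h z hz).spectralRadius_eq_zero]
  exact .of_spectralRadius_eq_zero (by simpa using this)

lemma spectrum_one_add_smul [Nontrivial A] (x : A) (s : ℂ) :
    spectrum ℂ (1 + s • x) = (1 + s * ·) '' spectrum ℂ x := by
  have h := spectrum.map_polynomial_aeval x (1 + C s * X : ℂ[X])
  simpa [Algebra.smul_def] using h

lemma spectralRadius_mul_spectralRadius_le_of_subsingleton {x : A}
    (hx : (spectrum ℂ x).Subsingleton) (s : ℂ) :
    spectralRadius ℂ (1 + s • x) * spectralRadius ℂ (1 + (-s) • x) ≤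
      (1 + (‖x‖₊ * ‖(1 : A)‖₊) ^ 2 * ‖s‖₊ ^ 2 : ℝ≥0) := by
  cases subsingleton_or_nontrivial A
  · simp
  obtain ⟨γ, hγ⟩ := spectrum.nonempty x
  have hγx : ‖γ‖₊ ≤ ‖x‖₊ * ‖(1 : A)‖₊ := spectrum.norm_le_norm_mul_of_mem hγ
  have hrad : ∀ s' : ℂ, spectralRadius ℂ (1 + s' • x) = ‖1 + s' * γ‖₊ := fun s' => by
    simp [spectralRadius, spectrum_one_add_smul, hx.eq_singleton_of_mem hγ]
  rw [hrad, hrad, ← ENNReal.coe_mul, ENNReal.coe_le_coe, ← nnnorm_mul]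
  calc ‖(1 + s * γ) * (1 + -s * γ)‖₊ = ‖1 - γ ^ 2 * s ^ 2‖₊ := by ring_nf
    _ ≤ ‖(1 : ℂ)‖₊ + ‖γ ^ 2 * s ^ 2‖₊ := nnnorm_sub_le _ _
    _ ≤ 1 + (‖x‖₊ * ‖(1 : A)‖₊) ^ 2 * ‖s‖₊ ^ 2 := by
        rw [nnnorm_one, nnnorm_mul, nnnorm_pow, nnnorm_pow]
        gcongr

lemma exists_norm_one_add_mul_norm_one_sub_le {w v : A} {R : ℝ} (hR : 0 < R)
    (h : ∀ μ ∈ sphere (0 : ℂ) R, (spectrum ℂ (w + μ • v)).Subsingleton) :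
    ∃ K : ℝ, ∀ α ∈ spectrum ℂ w, ∀ β ∈ spectrum ℂ w, ∀ s : ℂ,
      ‖1 + s * α‖ * ‖1 - s * β‖ ≤ 1 + K * ‖s‖ ^ 2 := by
  lift R to ℝ≥0 using hR.le
  refine ⟨((‖w‖₊ + R * ‖v‖₊) * ‖(1 : A)‖₊) ^ 2, fun α hα β hβ s => ?_⟩
  have : Nontrivial A := not_subsingleton_iff_nontrivial.mp fun _ => by simp at hα
  have hd : ∀ s' : ℂ, Differentiable ℂ fun μ : ℂ => 1 + s' • (w + μ • v) := fun s' => by fun_prop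
  have hcentre := spectralRadius_mul_spectralRadius_le_of_forall_mem_sphere (hd s) (hd (-s)) hR
    (C := 1 + ((‖w‖₊ + R * ‖v‖₊) * ‖(1 : A)‖₊) ^ 2 * ‖s‖₊ ^ 2) fun μ hμ => by
      refine (spectralRadius_mul_spectralRadius_le_of_subsingleton (h μ hμ) s).trans ?_
      have hnorm : ‖w + μ • v‖₊ ≤ ‖w‖₊ + R * ‖v‖₊ := by
        refine (nnnorm_add_le _ _).trans_eq ?_
        rw [nnnorm_smul, show ‖μ‖₊ = R from NNReal.eq (mem_sphere_zero_iff_norm.mp hμ)]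
      exact ENNReal.coe_le_coe.mpr (by gcongr)
  have hle : ∀ s' : ℂ, ∀ z ∈ spectrum ℂ w,
      (‖1 + s' * z‖₊ : ℝ≥0∞) ≤ spectralRadius ℂ (1 + s' • (w + (0 : ℂ) • v)) := fun s' z hz => by
    refine le_iSup₂ (f := fun (k : ℂ) _ => (‖k‖₊ : ℝ≥0∞)) (1 + s' * z) ?_
    rw [zero_smul, add_zero, spectrum_one_add_smul]
    exact ⟨z, hz, rfl⟩
  have hfinal := (mul_le_mul' (hle s α hα) (hle (-s) β hβ)).trans hcentre
  rw [neg_mul, ← sub_eq_add_neg] at hfinal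
  exact_mod_cast hfinal

lemma eq_of_forall_norm_one_add_mul_norm_one_sub_le {α β : ℂ} {K : ℝ}
    (h : ∀ s : ℂ, ‖1 + s * α‖ * ‖1 - s * β‖ ≤ 1 + K * ‖s‖ ^ 2) : α = β := by
  set d := α - β with hd
  set M := K * ‖d‖ ^ 2 + ‖star d ^ 2 * (α * β)‖
  have hbound : ∀ t > (0 : ℝ), ‖d‖ ^ 2 ≤ t * M := fun t ht => by
    have hexp : (1 + t * star d * α) * (1 - t * star d * β) =
        ((1 + t * ‖d‖ ^ 2 : ℝ) : ℂ) - t ^ 2 * (star d ^ 2 * (α * β)) := by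
      have hdd : star d * d = (‖d‖ : ℂ) ^ 2 := Complex.conj_mul' d
      push_cast
      rw [← hdd, hd]
      ring
    have hlow : 1 + t * ‖d‖ ^ 2 - t ^ 2 * ‖star d ^ 2 * (α * β)‖ ≤
        ‖1 + t * star d * α‖ * ‖1 - t * star d * β‖ := by
      rw [← norm_mul, hexp]
      refine le_trans (le_of_eq ?_) (norm_sub_norm_le _ _)
      rw [Complex.norm_of_nonneg (by positivity), norm_mul ((t : ℂ) ^ 2), norm_pow (t : ℂ),
        Complex.norm_of_nonneg ht.le]
    have hs := h (t * star d)
    rw [norm_mul, norm_star, Complex.norm_of_nonneg ht.le] at hs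
    refine le_of_mul_le_mul_left ?_ ht
    linear_combination hlow + hs
  have hlim : Tendsto (fun t : ℝ => t * M) (𝓝[>] 0) (𝓝 (0 * M)) :=
    ((continuous_id.mul continuous_const).tendsto 0).mono_left nhdsWithin_le_nhds
  have hd0 : ‖d‖ ^ 2 ≤ 0 * M :=
    ge_of_tendsto hlim (eventually_mem_nhdsWithin.mono fun t ht => hbound t ht)
  rw [zero_mul, _root_.sq_nonpos_iff, norm_eq_zero] at hd0
  exact sub_eq_zero.mp hd0

theorem spectrum_subsingleton_of_forall_mem_sphere {w v : A} {R : ℝ} (hR : 0 < R)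
    (h : ∀ μ ∈ sphere (0 : ℂ) R, (spectrum ℂ (w + μ • v)).Subsingleton) :
    (spectrum ℂ w).Subsingleton := by
  obtain ⟨K, hK⟩ := exists_norm_one_add_mul_norm_one_sub_le hR h
  exact fun α hα β hβ => eq_of_forall_norm_one_add_mul_norm_one_sub_le (hK α hα β hβ)

/-- The pencil `v + μ u` is `μ (u + μ⁻¹ v)`, so a polynomial with roots `μ F` makes it
quasinilpotent for large `μ`. -/
theorem isQuasinilpotent_of_eventually_spectrum_add_smul_subset {u v : A} {F : Set ℂ}
    (hF : F.Finite) (h : ∀ᶠ z : ℂ in 𝓝 0, spectrum ℂ (u + z • v) ⊆ F) : IsQuasinilpotent v := by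
  lift F to Finset ℂ using hF
  obtain ⟨δ, hδ, hball⟩ := Metric.eventually_nhds_iff.mp h
  have hsphere : ∀ μ ∈ sphere (0 : ℂ) (2 / δ),
      IsQuasinilpotent (aeval (v + μ • u) (∏ f ∈ F, (X - C (μ * f)))) := fun μ hμ => by
    have hμ0 : μ ≠ 0 := ne_of_mem_sphere hμ (by positivity)
    refine isQuasinilpotent_aeval fun z hz => ?_
    have hsmul : v + μ • u = μ • (u + μ⁻¹ • v) := by
      rw [smul_add, smul_inv_smul₀ hμ0, add_comm]
    have hmem : μ⁻¹ * z ∈ spectrum ℂ (u + μ⁻¹ • v) := by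
      rw [hsmul] at hz
      obtain ⟨y, hy, rfl⟩ := (spectrum.unit_smul_eq_smul (u + μ⁻¹ • v) (Units.mk0 μ hμ0)).le hz
      simpa [Units.smul_def, hμ0] using hy
    have hdist : dist μ⁻¹ 0 < δ := by
      rw [dist_zero_right, norm_inv, mem_sphere_zero_iff_norm.mp hμ, inv_div]
      linarith
    rw [eval_prod]
    refine Finset.prod_eq_zero (hball hdist hmem) ?_
    simp [mul_inv_cancel_left₀ hμ0]
  have h0 := IsQuasinilpotent.of_forall_mem_sphere
    (differentiable_aeval_prod_X_sub_C F (by fun_prop) (by fun_prop)) (by positivity) hsphere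
  refine IsQuasinilpotent.of_pow (n := F.card) ?_
  simpa using h0

lemma isQuasinilpotent_of_eventually_nzSpec_add_smul_subset {u v : A} {F : Set ℂ}
    (hF : F.Finite) (h : ∀ᶠ z : ℂ in 𝓝 0, nzSpec (u + z • v) ⊆ F) : IsQuasinilpotent v :=
  isQuasinilpotent_of_eventually_spectrum_add_smul_subset (hF.insert 0)
    (h.mono fun _ hz => by rwa [nzSpec, Set.sdiff_singleton_subset_iff] at hz)

end MaximumPrinciple

section Newburgh

lemma exists_isLocalMax_of_forall_le {X : Type*} [TopologicalSpace X] {f : X → ℕ∞} {W : Set X}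
    (hW : IsOpen W) (hne : W.Nonempty) {n : ℕ} (hn : ∀ x ∈ W, f x ≤ n) :
    ∃ x ∈ W, IsLocalMax f x := by
  induction n with
  | zero =>
    obtain ⟨x, hx⟩ := hne
    exact ⟨x, hx, (hW.eventually_mem hx).mono fun y hy => (hn y hy).trans zero_le⟩
  | succ n ih =>
    by_cases h : ∃ x ∈ W, f x = (n + 1 : ℕ)
    · obtain ⟨x, hx, hfx⟩ := h
      exact ⟨x, hx, (hW.eventually_mem hx).mono fun y hy => (hn y hy).trans hfx.ge⟩
    · push Not at h
      exact ih fun x hx => Order.le_of_lt_add_one ((hn x hx).lt_of_ne (h x hx))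

theorem exists_isLocalMax_of_lowerSemicontinuousAt {X : Type*} [TopologicalSpace X] [BaireSpace X]
    {f : X → ℕ∞} {N : Set X} (hN : IsOpen N) (hne : N.Nonempty) (hfin : ∀ x ∈ N, f x ≠ ⊤)
    (hf : ∀ x ∈ N, LowerSemicontinuousAt f x) : ∃ x ∈ N, IsLocalMax f x := by
  have hcover : N ⊆ ⋃ n : ℕ, {x ∈ N | f x ≤ n} := fun x hx =>
    Set.mem_iUnion.mpr ⟨(f x).toNat, hx, (ENat.natCast_toNat (hfin x hx)).ge⟩
  obtain ⟨n, hn⟩ : ∃ n : ℕ, ¬ IsNowhereDense {x ∈ N | f x ≤ n} := by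
    by_contra! h
    exact not_isMeagre_of_isOpen hN hne ((isMeagre_iUnion fun n => (h n).isMeagre).mono hcover)
  obtain ⟨y, hy⟩ := Set.nonempty_iff_ne_empty.mpr hn
  have hle : ∀ x ∈ N ∩ interior (closure {x ∈ N | f x ≤ n}), f x ≤ n := fun x hx => by
    by_contra! hlt
    obtain ⟨z, hz, hz'⟩ := ((mem_closure_iff_frequently.mp (interior_subset hx.2)).and_eventually
      (hf x hx.1 n hlt)).exists
    exact hz'.not_ge hz.2
  have hmeet : (N ∩ interior (closure {x ∈ N | f x ≤ n})).Nonempty := by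
    obtain ⟨z, hz, hz'⟩ := mem_closure_iff.mp (interior_subset hy) _ isOpen_interior hy
    exact ⟨z, hz'.1, hz⟩
  obtain ⟨x, hx, hmax⟩ := exists_isLocalMax_of_forall_le (hN.inter isOpen_interior) hmeet hle
  exact ⟨x, hx.1, hmax⟩

lemma exists_pos_forall_le_dist {X : Type*} [MetricSpace X] {s : Set X} (hs : s.Finite) :
    ∃ δ > 0, ∀ x ∈ s, ∀ y ∈ s, x ≠ y → δ ≤ dist x y := by
  obtain ⟨C, hC, hsep⟩ := hs.relatively_discrete
  obtain ⟨δ, hδ, hδC⟩ := ENNReal.lt_iff_exists_nnreal_btwn.mp hC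
  refine ⟨δ, by exact_mod_cast hδ, fun x hx y hy hxy => ?_⟩
  have hle := hδC.le.trans (hsep x hx y hy hxy)
  rwa [edist_nndist, ENNReal.coe_le_coe] at hle

variable {A : Type*} [NormedRing A] [NormedAlgebra ℂ A] [CompleteSpace A]

lemma continuousAt_resolvent_uncurry {x : A} {μ : ℂ} (hμ : μ ∈ resolventSet ℂ x) :
    ContinuousAt (fun q : A × ℂ => resolvent q.1 q.2) (x, μ) := by
  obtain ⟨u, hu⟩ := hμ
  refine ContinuousAt.comp (g := Ring.inverse) (f := fun q : A × ℂ => algebraMap ℂ A q.2 - q.1)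
    ?_ (((algebraMapCLM ℂ A).continuous.comp continuous_snd).sub continuous_fst).continuousAt
  rw [← hu]
  exact NormedRing.inverse_continuousAt u

lemma isOpen_setOf_mem_resolventSet : IsOpen {q : A × ℂ | q.2 ∈ resolventSet ℂ q.1} :=
  Units.isOpen.preimage (((algebraMapCLM ℂ A).continuous.comp continuous_snd).sub continuous_fst)

lemma exists_eventually_forall_mem_resolventSet_norm_resolvent_le {x : A} {K : Set ℂ}
    (hK : IsCompact K) (h : K ⊆ resolventSet ℂ x) :
    ∃ C > 0, ∀ᶠ y in 𝓝 x, ∀ μ ∈ K, μ ∈ resolventSet ℂ y ∧ ‖resolvent y μ‖ ≤ C := by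
  have hcont : ContinuousOn (resolvent x) K := fun μ hμ =>
    ((continuousAt_resolvent_uncurry (h hμ)).comp
      (f := fun μ : ℂ => (x, μ)) (by fun_prop)).continuousWithinAt
  obtain ⟨C, hC⟩ := hK.exists_bound_of_continuousOn hcont
  refine ⟨|C| + 1, by positivity, hK.eventually_forall_of_forall_eventually fun μ hμ => ?_⟩
  have hlt : ‖resolvent x μ‖ < |C| + 1 := by linarith [hC μ hμ, le_abs_self C]
  exact (isOpen_setOf_mem_resolventSet.eventually_mem (h hμ)).and
    (((continuousAt_resolvent_uncurry (h hμ)).norm.eventually_lt_const hlt).mono fun _ => le_of_lt)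

lemma norm_resolvent_le_of_forall_mem_sphere {y : A} {l : ℂ} {ρ C : ℝ} (hρ : 0 < ρ)
    (hball : closedBall l ρ ⊆ resolventSet ℂ y) (h : ∀ μ ∈ sphere l ρ, ‖resolvent y μ‖ ≤ C) :
    ‖resolvent y l‖ ≤ C := by
  have hd : DifferentiableOn ℂ (resolvent y) (closedBall l ρ) := fun z hz =>
    (spectrum.hasDerivAt_resolvent_const_left (hball hz)).differentiableAt.differentiableWithinAt
  rw [← closure_ball l hρ.ne'] at hd
  refine Complex.norm_le_of_forall_mem_frontier_norm_le isBounded_ball hd.diffContOnCl ?_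
    (subset_closure (mem_ball_self hρ))
  rwa [frontier_ball _ hρ.ne']

lemma mem_resolventSet_of_norm_sub_mul_norm_resolvent_lt {x y : A} {l : ℂ}
    (hl : l ∈ resolventSet ℂ y) (h : ‖y - x‖ * ‖resolvent y l‖ < 1) : l ∈ resolventSet ℂ x := by
  nontriviality A
  obtain ⟨u, hu⟩ := hl
  rw [resolvent, ← hu, Ring.inverse_unit] at h
  have hnear : ‖(algebraMap ℂ A l - x) - u‖ < ‖(↑u⁻¹ : A)‖⁻¹ := by
    rw [hu, sub_sub_sub_cancel_left, ← one_div, lt_div_iff₀ (norm_pos_iff.mpr u⁻¹.ne_zero)]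
    exact h
  exact (u.ofNearby _ hnear).isUnit

/-- If `y` had no spectrum in the disc, the maximum principle would carry the bound on its
resolvent from the circle to the centre `l`. -/
theorem eventually_exists_mem_spectrum_dist_lt {x : A} {l : ℂ} (hl : l ∈ spectrum ℂ x) {ρ : ℝ}
    (hρ : 0 < ρ) (hs : sphere l ρ ⊆ resolventSet ℂ x) :
    ∀ᶠ y in 𝓝 x, ∃ z ∈ spectrum ℂ y, dist z l < ρ := by
  obtain ⟨C, hC, hbound⟩ :=
    exists_eventually_forall_mem_resolventSet_norm_resolvent_le (isCompact_sphere l ρ) hs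
  filter_upwards [hbound, ball_mem_nhds x (inv_pos.mpr hC)] with y hy hyx
  by_contra! hno
  have hball : closedBall l ρ ⊆ resolventSet ℂ y := fun z hz => by
    obtain hlt | heq := (mem_closedBall.mp hz).lt_or_eq
    · by_contra hz'
      exact (hno z hz').not_gt hlt
    · exact (hy z heq).1
  refine hl (mem_resolventSet_of_norm_sub_mul_norm_resolvent_lt
    (hball (mem_closedBall_self hρ.le)) ?_)
  have hle := norm_resolvent_le_of_forall_mem_sphere hρ hball fun μ hμ => (hy μ hμ).2
  calc ‖y - x‖ * ‖resolvent y l‖ ≤ ‖y - x‖ * C := by gcongr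
    _ < C⁻¹ * C := by gcongr; exact mem_ball_iff_norm.mp hyx
    _ = 1 := inv_mul_cancel₀ hC.ne'

lemma eventually_forall_exists_mem_spectrum_dist_lt {x : A} (hfin : (spectrum ℂ x).Finite) {ρ : ℝ}
    (hρ : 0 < ρ) : ∀ᶠ y in 𝓝 x, ∀ l ∈ spectrum ℂ x, ∃ z ∈ spectrum ℂ y, dist z l < ρ := by
  rw [hfin.eventually_all]
  intro l hl
  obtain ⟨r, ⟨hr0, hrρ⟩, hr⟩ :=
    (Set.Ioo_infinite hρ).exists_notMem_finite (hfin.image (dist · l))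
  have hs : sphere l r ⊆ resolventSet ℂ x := fun z hz => by
    by_contra hz'
    exact hr ⟨z, hz', hz⟩
  filter_upwards [eventually_exists_mem_spectrum_dist_lt hl hr0 hs] with y ⟨z, hz, hzl⟩
  exact ⟨z, hz, hzl.trans hrρ⟩

lemma eventually_exists_mapsTo_injOn_nzSpec {x : A} (hfin : (spectrum ℂ x).Finite) {ρ : ℝ}
    (hρ : 0 < ρ) : ∀ᶠ y in 𝓝 x, ∃ g : ℂ → ℂ, Set.MapsTo g (nzSpec x) (nzSpec y) ∧
      Set.InjOn g (nzSpec x) ∧ ∀ l ∈ nzSpec x, dist (g l) l < ρ := by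
  obtain ⟨δ, hδ, hsep⟩ := exists_pos_forall_le_dist (hfin.insert 0)
  have hρδ : 0 < min ρ (δ / 2) := by positivity
  filter_upwards [eventually_forall_exists_mem_spectrum_dist_lt hfin hρδ] with y hy
  choose! g hg hgl using hy
  have hgδ : ∀ l ∈ spectrum ℂ x, dist (g l) l < δ / 2 := fun l hl =>
    (hgl l hl).trans_le (min_le_right _ _)
  refine ⟨g, fun l hl => ⟨hg l hl.1, fun h0 => ?_⟩, fun l hl m hm hlm => ?_, fun l hl =>
    (hgl l hl.1).trans_le (min_le_left _ _)⟩
  · have hle := hsep l (.inr hl.1) 0 (.inl rfl) hl.2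
    have hlt := hgδ l hl.1
    rw [show g l = 0 from h0, dist_comm] at hlt
    linarith
  · by_contra hne
    have hle := hsep l (.inr hl.1) m (.inr hm.1) hne
    have hlt := hgδ m hm.1
    rw [← hlm] at hlt
    linarith [dist_triangle_left l m (g l), hgδ l hl.1]

lemma lowerSemicontinuousAt_encard_nzSpec_mul {b x : A} (hfin : (spectrum ℂ (b * x)).Finite) :
    LowerSemicontinuousAt (fun y => (nzSpec (b * y)).encard) x := by
  intro n hn
  have hcont : ContinuousAt (b * ·) x := by fun_prop
  filter_upwards [hcont.eventually (eventually_exists_mapsTo_injOn_nzSpec hfin one_pos)]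
    with y ⟨g, hmaps, hinj, _⟩
  exact hn.trans_le (Set.encard_le_encard_of_injOn hmaps hinj)

lemma exists_isLocalMax_encard_nzSpec_mul {b : A} {N : Set A} (hN : IsOpen N) (hne : N.Nonempty)
    (hfin : ∀ x ∈ N, (spectrum ℂ (b * x)).Finite) :
    ∃ x ∈ N, IsLocalMax (fun y => (nzSpec (b * y)).encard) x :=
  exists_isLocalMax_of_lowerSemicontinuousAt hN hne
    (fun x hx => ((hfin x hx).subset Set.sdiff_subset).encard_lt_top.ne)
    fun x hx => lowerSemicontinuousAt_encard_nzSpec_mul (hfin x hx)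

lemma exists_eventually_spectrum_inter_ball_subsingleton {b x : A} {l : ℂ}
    (hfin : (spectrum ℂ (b * x)).Finite)
    (hmax : IsLocalMax (fun y => (nzSpec (b * y)).encard) x) (hl : l ∈ nzSpec (b * x)) :
    ∃ ρ > 0, ∀ᶠ y in 𝓝 x, (spectrum ℂ (b * y) ∩ ball l ρ).Subsingleton := by
  obtain ⟨δ, hδ, hsep⟩ := exists_pos_forall_le_dist (hfin.insert 0)
  have h0 : 0 ∉ ball l (δ / 2) := fun h => by
    have hle := hsep 0 (.inl rfl) l (.inr hl.1) (Ne.symm hl.2)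
    linarith [mem_ball.mp h]
  refine ⟨δ / 2, half_pos hδ, ?_⟩
  have hcont : ContinuousAt (b * ·) x := by fun_prop
  filter_upwards [hmax, hcont.eventually (eventually_exists_mapsTo_injOn_nzSpec hfin (half_pos hδ))]
    with y hy ⟨g, hmaps, hinj, hgl⟩
  have himage : g '' nzSpec (b * x) = nzSpec (b * y) :=
    ((hfin.subset Set.sdiff_subset).image g).eq_of_subset_of_encard_le hmaps.image_subset
      (hy.trans hinj.encard_image.ge)
  have hg : ∀ z ∈ spectrum ℂ (b * y) ∩ ball l (δ / 2), z = g l := fun z ⟨hz, hzl⟩ => by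
    obtain ⟨m, hm, rfl⟩ := himage.ge ⟨hz, fun h => h0 (h ▸ hzl)⟩
    by_contra hne
    have hle := hsep m (.inr hm.1) l (.inr hl.1) fun h => hne (h ▸ rfl)
    linarith [dist_triangle_left m l (g m), hgl m hm, mem_ball.mp hzl]
  exact fun z hz z' hz' => (hg z hz).trans (hg z' hz').symm

end Newburgh

section IdempotentLifting

lemma catalan_le_four_pow (n : ℕ) : catalan n ≤ 4 ^ n :=
  calc catalan n ≤ (n + 1) * catalan n := Nat.le_mul_of_pos_left _ n.succ_pos
    _ = n.centralBinom := succ_mul_catalan_eq_centralBinom n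
    _ ≤ 4 ^ n := n.centralBinom_le_four_pow

lemma isIdempotentElem_add_one_sub_two_mul {R : Type*} [Ring R] {h x : R} (hc : Commute h x)
    (hx : (1 + 4 * (h * h - h)) * (x - x * x) = h * h - h) :
    IsIdempotentElem (h + (1 - 2 * h) * x) := by
  rw [IsIdempotentElem]
  linear_combination (norm := noncomm_ring) -hx - (1 - 2 * h) * hc.eq + 2 * (1 - 2 * h) * hc.eq * x

variable {A : Type*} [NormedRing A] [NormedAlgebra ℂ A] [CompleteSpace A]

namespace IsQuasinilpotent

lemma summable_norm_catalan_nsmul_pow {t : A} (ht : IsQuasinilpotent t) :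
    Summable fun n => ‖catalan n • t ^ n‖ := by
  refine .of_norm_bounded_eventually_nat summable_geometric_two ?_
  filter_upwards [ht.eventually_norm_pow_le (ε := 1 / 8) (by norm_num)] with n hn
  calc ‖‖catalan n • t ^ n‖‖ ≤ catalan n * ‖t ^ n‖ := by rw [norm_norm]; exact norm_nsmul_le
    _ ≤ 4 ^ n * (1 / 8) ^ n := by gcongr; exact_mod_cast catalan_le_four_pow n
    _ = (1 / 2) ^ n := by rw [← mul_pow]; norm_num

/-- The generating function of the Catalan numbers solves the quadratic equation. -/
lemma exists_eq_one_add_mul_mul_self {t : A} (ht : IsQuasinilpotent t) :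
    ∃ c, c = 1 + t * (c * c) ∧ ∀ y, Commute t y → Commute c y := by
  have hsum := ht.summable_norm_catalan_nsmul_pow
  refine ⟨∑' n, catalan n • t ^ n, ?_, fun y hy =>
    .tsum_left y fun n => (hy.pow_left n).smul_left _⟩
  rw [tsum_mul_tsum_eq_tsum_sum_antidiagonal_of_summable_norm hsum hsum,
    hsum.of_norm.tsum_eq_zero_add, ← Summable.tsum_mul_left]
  · simp only [catalan_zero, pow_zero, one_smul]
    congr 1
    refine tsum_congr fun n => ?_
    rw [catalan_succ', Finset.sum_smul, Finset.mul_sum]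
    refine Finset.sum_congr rfl fun kl hkl => ?_
    rw [← Finset.HasAntidiagonal.mem_antidiagonal.mp hkl, smul_mul_smul_comm, ← pow_add,
      mul_smul_comm, pow_succ']
  · exact (summable_norm_sum_mul_antidiagonal_of_summable_norm hsum hsum).of_norm

theorem exists_one_add_four_mul_mul_sub_mul_self_eq {n : A} (hn : IsQuasinilpotent n) :
    ∃ r, (1 + 4 * n) * (n * r - n * r * (n * r)) = n ∧ ∀ y, Commute n y → Commute r y := by
  obtain ⟨v, hv⟩ : IsUnit (1 + 4 * n) := by
    simpa [Algebra.smul_def, map_ofNat (algebraMap ℂ A) 4] using (hn.smul (-4)).isUnit_one_sub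
  have hvc : ∀ y, Commute n y → Commute (↑v⁻¹ : A) y := fun y hy =>
    Commute.units_inv_left (hv ▸ (Commute.one_left y).add_left
      ((Nat.cast_commute 4 y).mul_left hy))
  have hvn : Commute (↑v⁻¹ : A) n := hvc n (.refl n)
  obtain ⟨c, hc, hcc⟩ := (hn.mul_of_commute hvn.symm).exists_eq_one_add_mul_mul_self
  refine ⟨↑v⁻¹ * c, ?_, fun y hy => (hvc y hy).mul_left (hcc y (hy.mul_left (hvc y hy)))⟩
  have hct : Commute c (n * ↑v⁻¹) := hcc _ (.refl _)
  calc (1 + 4 * n) * (n * (↑v⁻¹ * c) - n * (↑v⁻¹ * c) * (n * (↑v⁻¹ * c)))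
      = v * (n * ↑v⁻¹ * (c - c * (n * ↑v⁻¹) * c)) := by rw [hv]; noncomm_ring
    _ = v * (↑v⁻¹ * n) := by
        rw [hct.eq, sub_eq_of_eq_add (hc.trans (by rw [mul_assoc _ c c])), mul_one, hvn.eq]
    _ = n := v.mul_inv_cancel_left n

theorem exists_isIdempotentElem_mul {h : A} (hn : IsQuasinilpotent (h * h - h)) :
    ∃ s, IsIdempotentElem (h * s) ∧ IsQuasinilpotent (h * s - h) ∧
      ∀ y, Commute h y → Commute s y := by
  obtain ⟨r, hr, hrn⟩ := hn.exists_one_add_four_mul_mul_sub_mul_self_eq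
  have hcn : ∀ y, Commute h y → Commute (h * h - h) y := fun y hy => (hy.mul_left hy).sub_left hy
  have hcr : ∀ y, Commute h y → Commute ((1 - 2 * h) * r) y := fun y hy =>
    ((Commute.one_left y).sub_left ((Nat.cast_commute 2 y).mul_left hy)).mul_left
      (hrn y (hcn y hy))
  have hnh : Commute (h * h - h) h := hcn h (.refl h)
  have hs : h * (1 + (h - 1) * ((1 - 2 * h) * r)) = h + (h * h - h) * ((1 - 2 * h) * r) := by
    noncomm_ring
  refine ⟨1 + (h - 1) * ((1 - 2 * h) * r), ?_, ?_, fun y hy =>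
    (Commute.one_left y).add_left ((hy.sub_left (.one_left y)).mul_left (hcr y hy))⟩
  · have hidem := isIdempotentElem_add_one_sub_two_mul (hnh.symm.mul_right (hrn h hnh).symm) hr
    rwa [hs, (hcr _ hnh.symm).symm.eq, mul_assoc, (hrn _ (.refl _)).eq]
  · rw [hs, add_sub_cancel_left]
    exact hn.mul_of_commute (hcr _ hnh.symm).symm

end IsQuasinilpotent

end IdempotentLifting

section RieszIdempotent

variable {A : Type*} [NormedRing A] [NormedAlgebra ℂ A] [CompleteSpace A]

lemma exists_polynomial_eval_eq_zero_eval_eq_one {S : Set ℂ} (hS : S.Finite) {l : ℂ}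
    (hl : l ∉ S) : ∃ q : ℂ[X], (∀ z ∈ S, q.eval z = 0) ∧ q.eval l = 1 := by
  classical
  refine ⟨Lagrange.basis (insert l hS.toFinset) id l, fun z hz => ?_, ?_⟩
  · exact Lagrange.eval_basis_of_ne (v := id) (ne_of_mem_of_not_mem hz hl).symm (by simp [hz])
  · exact Lagrange.eval_basis_self (v := id) Function.injective_id.injOn (by simp)

/-- A polynomial equal to `1` at `l` and to `0` at `0` and on the rest of the spectrum takes `u` to
an idempotent modulo a quasinilpotent, which is then lifted. -/
theorem exists_isIdempotentElem_isQuasinilpotent_sub_smul_mul {u : A} (hfin : (spectrum ℂ u).Finite)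
    {l : ℂ} (hl : l ∈ nzSpec u) :
    ∃ t, IsIdempotentElem (u * t) ∧ u * t ≠ 0 ∧ Commute u t ∧
      IsQuasinilpotent ((u - l • 1) * (u * t)) := by
  obtain ⟨q, hq, hql⟩ := exists_polynomial_eval_eq_zero_eval_eq_one
    ((hfin.sdiff (t := {l})).insert 0) (l := l) (by simpa using hl.2)
  have hqz : ∀ z ∈ spectrum ℂ u, z = l ∨ q.eval z = 0 := fun z hz =>
    or_iff_not_imp_left.mpr fun hzl => hq z (.inr ⟨hz, hzl⟩)
  have hcomm : ∀ p : ℂ[X], Commute u (aeval u p) := fun p => by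
    simpa using (commute_X p).map (aeval u)
  have hidem : IsQuasinilpotent (aeval u q * aeval u q - aeval u q) := by
    rw [← map_mul, ← map_sub]
    refine isQuasinilpotent_aeval fun z hz => ?_
    obtain rfl | hqz := hqz z hz <;> simp [*]
  have hul : IsQuasinilpotent ((u - l • 1) * aeval u q) := by
    have h : (u - l • 1) * aeval u q = aeval u ((X - C l) * q) := by
      simp [Algebra.algebraMap_eq_smul_one]
    rw [h]
    refine isQuasinilpotent_aeval fun z hz => ?_
    obtain rfl | hqz := hqz z hz <;> simp [*]
  obtain ⟨g, hg⟩ : X ∣ q := X_dvd_iff.mpr (by rw [coeff_zero_eq_eval_zero]; exact hq 0 (.inl rfl))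
  obtain ⟨s, hs, hsq, hsc⟩ := hidem.exists_isIdempotentElem_mul
  have hus : Commute u s := (hsc u (hcomm q).symm).symm
  have hqs : u * (aeval u g * s) = aeval u q * s := by
    rw [hg, map_mul, aeval_X, mul_assoc]
  refine ⟨aeval u g * s, hqs ▸ hs, fun h0 => ?_, (hcomm g).mul_right hus, ?_⟩
  · rw [hqs] at h0
    have h1 : 1 ∈ spectrum ℂ (aeval u q) := spectrum.subset_polynomial_aeval u q ⟨l, hl.1, hql⟩
    rw [h0, zero_sub] at hsq
    exact one_ne_zero ((neg_neg (aeval u q) ▸ hsq.neg) h1)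
  · rw [hqs, ← mul_assoc]
    exact hul.mul_of_commute (((hus.sub_left ((Commute.one_left s).smul_left l)).mul_left
      (hsc _ (.refl _)).symm))

end RieszIdempotent

section Corner

/-- The inclusion of a corner `pRp`, which is not unital, into the ambient ring. -/
def cornerSubtype {R : Type*} [NonUnitalRing R] {p : R} (hp : IsIdempotentElem p) :
    hp.Corner →ₙ+* R :=
  NonUnitalSubringClass.subtype (NonUnitalRing.corner p)

lemma cornerSubtype_injective {R : Type*} [NonUnitalRing R] {p : R} (hp : IsIdempotentElem p) :
    Function.Injective (cornerSubtype hp) :=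
  Subtype.val_injective

lemma range_cornerSubtype {R : Type*} [NonUnitalRing R] {p : R} (hp : IsIdempotentElem p) :
    Set.range (cornerSubtype hp) = {x | p * x = x ∧ x * p = x} :=
  Subtype.range_coe.trans (Set.ext fun _ => Subsemigroup.mem_corner_iff hp)

lemma mul_mul_mem_range_cornerSubtype {R : Type*} [NonUnitalRing R] {p : R}
    (hp : IsIdempotentElem p) (y : R) : p * y * p ∈ Set.range (cornerSubtype hp) := by
  rw [range_cornerSubtype]
  exact ⟨by simp only [← mul_assoc, hp.eq], by rw [mul_assoc, hp.eq]⟩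

lemma cornerSubtype_one {R : Type*} [Ring R] {p : R} (hp : IsIdempotentElem p) :
    cornerSubtype hp 1 = p := rfl

lemma cornerSubtype_pow {R : Type*} [Ring R] {p : R} (hp : IsIdempotentElem p) (x : hp.Corner)
    {n : ℕ} (hn : n ≠ 0) : cornerSubtype hp (x ^ n) = cornerSubtype hp x ^ n := by
  induction n, Nat.one_le_iff_ne_zero.mpr hn using Nat.le_induction with
  | base => simp only [pow_one]
  | succ n hn ih => rw [pow_succ, map_mul, ih (by omega), pow_succ]

section Algebra

variable {A : Type*} [Ring A] [Algebra ℂ A] {p : A} (hp : IsIdempotentElem p)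

instance : SMul ℂ hp.Corner :=
  ⟨fun c x => ⟨c • x.1, by
    obtain ⟨hl, hr⟩ := (Subsemigroup.mem_corner_iff hp).mp x.2
    exact (Subsemigroup.mem_corner_iff hp).mpr
      ⟨by rw [mul_smul_comm, hl], by rw [smul_mul_assoc, hr]⟩⟩⟩

lemma cornerSubtype_smul (c : ℂ) (x : hp.Corner) :
    cornerSubtype hp (c • x) = c • cornerSubtype hp x := rfl

instance : Module ℂ hp.Corner :=
  (cornerSubtype_injective hp).module ℂ (cornerSubtype hp).toAddMonoidHom (cornerSubtype_smul hp)

instance : Algebra ℂ hp.Corner :=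
  Algebra.ofModule
    (fun c x y => cornerSubtype_injective hp (by
      rw [map_mul, cornerSubtype_smul, cornerSubtype_smul, map_mul, smul_mul_assoc]))
    (fun c x y => cornerSubtype_injective hp (by
      rw [map_mul, cornerSubtype_smul, cornerSubtype_smul, map_mul, mul_smul_comm]))

lemma cornerSubtype_algebraMap (z : ℂ) : cornerSubtype hp (algebraMap ℂ hp.Corner z) = z • p := by
  rw [Algebra.algebraMap_eq_smul_one, cornerSubtype_smul, cornerSubtype_one]

lemma spectrum_subset_spectrum_cornerSubtype_add {w : hp.Corner} {y : A} (hpy : p * y = 0)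
    (hyp : y * p = 0) : spectrum ℂ w ⊆ spectrum ℂ (cornerSubtype hp w + y) := by
  obtain ⟨hpw, hwp⟩ := (range_cornerSubtype hp).le ⟨w, rfl⟩
  intro z hz hunit
  obtain ⟨U, hU⟩ := hunit
  have hleft : p * U = z • p - cornerSubtype hp w := by
    rw [hU, mul_sub, mul_add, hpw, hpy, add_zero, ← Algebra.commutes, Algebra.smul_def]
  have hright : U * p = z • p - cornerSubtype hp w := by
    rw [hU, sub_mul, add_mul, hwp, hyp, add_zero, Algebra.smul_def]
  obtain ⟨v, hv⟩ := mul_mul_mem_range_cornerSubtype hp (↑U⁻¹ : A)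
  refine hz (isUnit_iff_exists.mpr
    ⟨v, cornerSubtype_injective hp ?_, cornerSubtype_injective hp ?_⟩)
  · rw [map_mul, map_sub, cornerSubtype_algebraMap, cornerSubtype_one, hv, ← mul_assoc, ← mul_assoc,
      ← hright, mul_assoc (U : A) p p, hp.eq, hright, ← hleft, U.mul_inv_cancel_right, hp.eq]
  · rw [map_mul, map_sub, cornerSubtype_algebraMap, cornerSubtype_one, hv, mul_assoc,
      ← hleft, ← mul_assoc p p, hp.eq, hleft, ← hright, mul_assoc, U.inv_mul_cancel_left, hp.eq]

end Algebra

/-- The corner `pAp` carries the norm of `A`. -/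
instance {A : Type*} [NormedRing A] {p : A} (hp : IsIdempotentElem p) : NormedRing hp.Corner :=
  NormedRing.induced hp.Corner A (cornerSubtype hp) (cornerSubtype_injective hp)

lemma norm_cornerSubtype {A : Type*} [NormedRing A] {p : A} (hp : IsIdempotentElem p)
    (x : hp.Corner) : ‖cornerSubtype hp x‖ = ‖x‖ := rfl

lemma isometry_cornerSubtype {A : Type*} [NormedRing A] {p : A} (hp : IsIdempotentElem p) :
    Isometry (cornerSubtype hp) :=
  AddMonoidHomClass.isometry_of_norm _ (norm_cornerSubtype hp)

instance {A : Type*} [NormedRing A] {p : A} (hp : IsIdempotentElem p) [CompleteSpace A] :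
    CompleteSpace hp.Corner := by
  refine (isometry_cornerSubtype hp).isUniformInducing.completeSpace (IsClosed.isComplete ?_)
  rw [range_cornerSubtype]
  exact (isClosed_eq (by fun_prop) continuous_id).inter (isClosed_eq (by fun_prop) continuous_id)

variable {A : Type*} [NormedRing A] [NormedAlgebra ℂ A] {p : A} (hp : IsIdempotentElem p)

instance : NormedAlgebra ℂ hp.Corner where
  norm_smul_le c x := norm_smul_le c (cornerSubtype hp x)

lemma isQuasinilpotent_cornerSubtype_iff [CompleteSpace A] {x : hp.Corner} :
    IsQuasinilpotent (cornerSubtype hp x) ↔ IsQuasinilpotent x := by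
  have hnorm : ∀ᶠ n : ℕ in atTop, ‖cornerSubtype hp x ^ n‖ = ‖x ^ n‖ := by
    filter_upwards [eventually_ne_atTop 0] with n hn
    rw [← cornerSubtype_pow hp x hn, norm_cornerSubtype]
  constructor <;> refine fun h => .of_forall_eventually_norm_pow_le fun ε hε => ?_
  · filter_upwards [h.eventually_norm_pow_le hε, hnorm] with n hn hxn
    exact hxn.ge.trans hn
  · filter_upwards [h.eventually_norm_pow_le hε, hnorm] with n hn hxn
    exact hxn.le.trans hn

end Corner

section SubsingletonSpectra

variable {A : Type*} [NormedRing A] [NormedAlgebra ℂ A] [CompleteSpace A]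

lemma spectrum_subsingleton_of_eventually {u : A}
    (h : ∀ᶠ w in 𝓝 u, (spectrum ℂ w).Subsingleton) (w : A) : (spectrum ℂ w).Subsingleton := by
  obtain ⟨ε, hε, hball⟩ :=
    Metric.eventually_nhds_iff.mp ((tendsto_add_smul_nhds_zero u w).eventually h)
  refine spectrum_subsingleton_of_forall_mem_sphere (v := u) (R := 2 / ε) (by positivity)
    fun μ hμ => ?_
  have hnorm : ‖μ‖ = 2 / ε := mem_sphere_zero_iff_norm.mp hμ
  have hμ0 : μ ≠ 0 := norm_pos_iff.mp (hnorm ▸ by positivity)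
  have hsmul : w + μ • u = Units.mk0 μ hμ0 • (u + μ⁻¹ • w) := by
    rw [Units.smul_mk0, smul_add, smul_smul, mul_inv_cancel₀ hμ0, one_smul, add_comm]
  rw [hsmul, spectrum.unit_smul_eq_smul]
  refine (hball ?_).image _
  rw [dist_zero_right, norm_inv, hnorm, inv_div]
  exact half_lt_self hε

lemma IsQuasinilpotent.mul_of_forall_spectrum_subsingleton
    (h : ∀ w : A, (spectrum ℂ w).Subsingleton) {v : A} (hv : IsQuasinilpotent v) (y : A) :
    IsQuasinilpotent (v * y) := by
  cases subsingleton_or_nontrivial A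
  · simp [IsQuasinilpotent]
  intro c hc
  by_contra hc0
  have hunit : ∀ w : A, c ∈ spectrum ℂ w → IsUnit w := fun w hw => by
    by_contra hw0
    exact hc0 (h w hw (spectrum.zero_mem ℂ hw0))
  obtain ⟨r, hr⟩ := (hunit _ hc).exists_right_inv
  obtain ⟨l, hl⟩ := (hunit (y * v) ((spectrum.nonzero_mul_comm v y).le ⟨hc, hc0⟩).1).exists_left_inv
  have hvunit : IsUnit v := isUnit_iff_exists_and_exists.mpr
    ⟨⟨y * r, by rw [← mul_assoc, hr]⟩, ⟨l * y, by rw [mul_assoc, hl]⟩⟩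
  obtain ⟨z, hz⟩ := spectrum.nonempty v
  exact spectrum.zero_notMem ℂ hvunit (hv hz ▸ hz)

end SubsingletonSpectra

section MinimalIdempotent

variable {A : Type*} [Ring A] [Algebra ℂ A]

/-- A minimal idempotent `p` of a complex algebra: a nonzero idempotent whose corner `pAp` is `ℂp`.
In a semisimple Banach algebra these are the idempotents of rank one. -/
structure IsMinimalIdempotent (p : A) : Prop where
  isIdempotentElem : IsIdempotentElem p
  ne_zero : p ≠ 0
  exists_mul_mul_eq_smul (y : A) : ∃ c : ℂ, p * y * p = c • p

/-- Perturbing `x` by `x t w` changes `b x` only in the corner of the idempotent `p = b x t`. -/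
lemma spectrum_corner_subset_spectrum_mul {b x t : A} (hp : IsIdempotentElem (b * x * t))
    (hc : Commute (b * x) t) (w : hp.Corner) :
    spectrum ℂ w ⊆
      spectrum ℂ (b * (x + x * t * (cornerSubtype hp w - b * x * (b * x * t)))) := by
  obtain ⟨hpw, -⟩ := (range_cornerSubtype hp).le ⟨w, rfl⟩
  set u := b * x with hu
  set p := u * t with hpt
  have hup : Commute u p := (Commute.refl u).mul_right hc
  have hX : b * (x + x * t * (cornerSubtype hp w - u * p)) =
      cornerSubtype hp w + u * (1 - p) := by
    rw [mul_add, ← mul_assoc, ← mul_assoc, ← hu, ← hpt, mul_sub, hpw, ← mul_assoc p, ← hup.eq,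
      mul_assoc u, hp.eq, mul_sub, mul_one]
    abel
  rw [hX]
  refine spectrum_subset_spectrum_cornerSubtype_add hp ?_ ?_
  · rw [← mul_assoc, ← hup.eq, mul_assoc, hp.mul_one_sub_self, mul_zero]
  · rw [mul_assoc, hp.one_sub_mul_self, mul_zero]

end MinimalIdempotent

section BanachAlgebra

variable {A : Type*} [NormedRing A] [NormedAlgebra ℂ A] [CompleteSpace A]

lemma isMinimalIdempotent_of_forall_spectrum_subsingleton
    (hss : JacobsonSemisimple A) {p : A} (hp : IsIdempotentElem p) (hp0 : p ≠ 0)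
    (h : ∀ w : hp.Corner, (spectrum ℂ w).Subsingleton) : IsMinimalIdempotent p := by
  have : Nontrivial hp.Corner := ⟨1, 0, fun h10 => hp0 (congrArg (cornerSubtype hp) h10)⟩
  refine ⟨hp, hp0, fun y => ?_⟩
  obtain ⟨w, hw⟩ := mul_mul_mem_range_cornerSubtype hp y
  obtain ⟨c, hc⟩ := spectrum.nonempty w
  have hq : IsQuasinilpotent (w - algebraMap ℂ hp.Corner c) :=
    isQuasinilpotent_sub_algebraMap_iff.mpr fun _ hz => h w hz hc
  have hv : cornerSubtype hp (w - algebraMap ℂ hp.Corner c) = p * y * p - c • p := by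
    rw [map_sub, hw, cornerSubtype_algebraMap]
  obtain ⟨hpv, hvp⟩ := (range_cornerSubtype hp).le ⟨_, hv⟩
  refine ⟨c, sub_eq_zero.mp (hss.eq_zero_of_forall_isQuasinilpotent_mul fun x => ?_)⟩
  obtain ⟨x', hx'⟩ := mul_mul_mem_range_cornerSubtype hp x
  have hqx := (isQuasinilpotent_cornerSubtype_iff hp).mpr
    (hq.mul_of_forall_spectrum_subsingleton h x')
  rw [map_mul, hx', hv, ← mul_assoc, ← mul_assoc, hvp] at hqx
  simpa only [← mul_assoc, hpv] using hqx.mul_comm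

lemma IsMinimalIdempotent.mul_eq_smul_of_isQuasinilpotent {p : A} (hp : IsMinimalIdempotent p)
    {u : A} {l : ℂ} (hup : Commute u p) (hq : IsQuasinilpotent ((u - l • 1) * p)) :
    u * p = l • p := by
  obtain ⟨c, hc⟩ := hp.exists_mul_mul_eq_smul u
  have huc : u * p = c • p := by
    rw [← hc, ← hup.eq, mul_assoc, hp.isIdempotentElem.eq]
  rw [sub_mul, huc, smul_mul_assoc, one_mul, ← sub_smul] at hq
  obtain rfl : c = l := by
    by_contra hcl
    have hqp := hq.smul (c - l)⁻¹
    rw [inv_smul_smul₀ (sub_ne_zero.mpr hcl)] at hqp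
    exact hp.ne_zero (hqp.eq_zero_of_isIdempotentElem hp.isIdempotentElem)
  exact huc

theorem exists_isMinimalIdempotent_mul_eq_smul (hss : JacobsonSemisimple A) {b x : A} {l : ℂ}
    (hfin : (spectrum ℂ (b * x)).Finite)
    (hmax : IsLocalMax (fun y => (nzSpec (b * y)).encard) x) (hl : l ∈ nzSpec (b * x)) :
    ∃ p, IsMinimalIdempotent p ∧ b * x * p = l • p ∧ p * (b * x) = l • p := by
  obtain ⟨t, hp, hp0, hc, hq⟩ := exists_isIdempotentElem_isQuasinilpotent_sub_smul_mul hfin hl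
  obtain ⟨ρ, hρ, hball⟩ := exists_eventually_spectrum_inter_ball_subsingleton hfin hmax hl
  have hup : Commute (b * x) (b * x * t) := (Commute.refl _).mul_right hc
  obtain ⟨w₀, hw₀⟩ : b * x * (b * x * t) ∈ Set.range (cornerSubtype hp) := by
    rw [range_cornerSubtype]
    exact ⟨by rw [← mul_assoc, ← hup.eq, mul_assoc, hp.eq], by rw [mul_assoc, hp.eq]⟩
  have hspec : spectrum ℂ w₀ ⊆ {l} := by
    rw [← isQuasinilpotent_sub_algebraMap_iff, ← isQuasinilpotent_cornerSubtype_iff, map_sub, hw₀,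
      cornerSubtype_algebraMap]
    rwa [sub_mul, smul_mul_assoc, one_mul] at hq
  have hnear : ∀ᶠ w in 𝓝 w₀, spectrum ℂ w ⊆ ball l ρ :=
    upperHemicontinuousAt_iff_forall_isOpen.mp (upperHemicontinuous_spectrum ℂ _ w₀) _
      isOpen_ball (hspec.trans (Set.singleton_subset_iff.mpr (mem_ball_self hρ)))
  have hcont : Tendsto (fun w => x + x * t * (cornerSubtype hp w - b * x * (b * x * t)))
      (𝓝 w₀) (𝓝 x) := by
    have hcts := (isometry_cornerSubtype hp).continuous
    refine Continuous.tendsto' (by fun_prop) _ _ ?_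
    rw [hw₀, sub_self, mul_zero, add_zero]
  have hsing : ∀ᶠ w in 𝓝 w₀, (spectrum ℂ w).Subsingleton := by
    filter_upwards [hnear, hcont.eventually hball] with w hw hsing
    exact hsing.anti (Set.subset_inter (spectrum_corner_subset_spectrum_mul hp hc w) hw)
  have hmin := isMinimalIdempotent_of_forall_spectrum_subsingleton hss hp hp0
    (spectrum_subsingleton_of_eventually hsing)
  have hul := hmin.mul_eq_smul_of_isQuasinilpotent hup hq
  exact ⟨b * x * t, hmin, hul, hup.eq ▸ hul⟩

end BanachAlgebra

section OrthogonalIdempotents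

variable {𝕜 R ι : Type*} [Field 𝕜] [Ring R] [Algebra 𝕜 R]

lemma mem_spectrum_of_mul_eq_smul {u q : R} {c : 𝕜} (hq : q ≠ 0) (h : u * q = c • q) :
    c ∈ spectrum 𝕜 u := fun hunit =>
  hq (hunit.mul_right_eq_zero.mp (by rw [sub_mul, h, Algebra.smul_def, sub_self]))

lemma orthogonalIdempotents_of_mul_eq_smul {q : ι → R} {u : R} {f : ι → 𝕜}
    (hf : Function.Injective f) (hq : ∀ i, IsIdempotentElem (q i))
    (hl : ∀ i, q i * u = f i • q i) (hr : ∀ i, u * q i = f i • q i) :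
    OrthogonalIdempotents q := by
  refine ⟨hq, fun i j hij => ?_⟩
  have h : f i • (q i * q j) = f j • (q i * q j) := by
    rw [← smul_mul_assoc, ← hl, mul_assoc, hr, mul_smul_comm]
  rw [← sub_eq_zero, ← sub_smul] at h
  exact (smul_eq_zero_iff_right (sub_ne_zero.mpr (hf.ne hij))).mp h

lemma exists_units_conj_eq_add_smul {u v : R} {l m : 𝕜} (huv : u * v = l • v)
    (hvu : v * u = m • v) (hv : v * v = 0) (s : 𝕜) :
    ∃ T : Rˣ, (T : R) = 1 + s • v ∧ T * u * ↑T⁻¹ = u + (s * (m - l)) • v := by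
  have hsv : (s • v) * (s • v) = 0 := by rw [smul_mul_smul_comm, hv, smul_zero]
  let T : Rˣ := ⟨1 + s • v, 1 - s • v,
    by rw [← (Commute.one_left _).mul_self_sub_mul_self_eq, hsv, mul_one, sub_zero],
    by rw [← (Commute.one_left _).mul_self_sub_mul_self_eq', hsv, mul_one, sub_zero]⟩
  refine ⟨T, rfl, (Units.mul_inv_eq_iff_eq_mul T).mpr ?_⟩
  change (1 + s • v) * u = (u + (s * (m - l)) • v) * (1 + s • v)
  simp only [add_mul, mul_add, one_mul, mul_one, smul_mul_assoc, mul_smul_comm, huv, hvu, hv,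
    smul_zero, add_zero]
  module

variable {p : ι → R}

lemma orthogonalIdempotents_units_conj (hp : OrthogonalIdempotents p) (T : Rˣ) :
    OrthogonalIdempotents fun i => T * p i * ↑T⁻¹ := by
  simpa only [Function.comp_def, MulSemiringAction.toRingHom_apply, ConjAct.units_smul_def,
    ConjAct.ofConjAct_toConjAct] using
    hp.map (MulSemiringAction.toRingHom (ConjAct Rˣ) R (ConjAct.toConjAct T))

variable [Fintype ι]

lemma mul_sum_smul_eq_smul (hp : OrthogonalIdempotents p) (f : ι → 𝕜) (i : ι) :
    p i * ∑ j, f j • p j = f i • p i := by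
  classical
  simp [Finset.mul_sum, hp.mul_eq]

lemma sum_smul_mul_eq_smul (hp : OrthogonalIdempotents p) (f : ι → 𝕜) (i : ι) :
    (∑ j, f j • p j) * p i = f i • p i := by
  classical
  simp [Finset.sum_mul, hp.mul_eq]

lemma sum_mul_eq (hp : OrthogonalIdempotents p) (i : ι) : (∑ j, p j) * p i = p i := by
  classical
  simp [Finset.sum_mul, hp.mul_eq]

lemma sum_mul_sum_smul (hp : OrthogonalIdempotents p) (f : ι → 𝕜) :
    (∑ i, p i) * ∑ i, f i • p i = ∑ i, f i • p i := by
  simp only [Finset.mul_sum, mul_smul_comm, sum_mul_eq hp]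

lemma sum_smul_mul_sum_smul (hp : OrthogonalIdempotents p) (f g : ι → 𝕜) :
    (∑ i, f i • p i) * ∑ i, g i • p i = ∑ i, (f i * g i) • p i := by
  simp only [Finset.sum_mul, smul_mul_assoc, mul_sum_smul_eq_smul hp, smul_smul]

lemma exists_mul_eq_sum_of_mul_eq_sum_smul (hp : OrthogonalIdempotents p) {l : ι → 𝕜}
    (hl : ∀ i, l i ≠ 0) {b x : R} (hbx : b * x = ∑ i, l i • p i) :
    ∃ w, b * w = ∑ i, p i ∧ w * ∑ i, p i = w := by
  refine ⟨x * ∑ i, (l i)⁻¹ • p i, ?_, ?_⟩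
  · simp only [← mul_assoc, hbx, sum_smul_mul_sum_smul hp, mul_inv_cancel₀ (hl _), one_smul]
  · simp only [mul_assoc, Finset.sum_mul, smul_mul_assoc, hp.mul_sum_of_mem (Finset.mem_univ _)]

lemma spectrum_sum_smul_subset_range (hp : CompleteOrthogonalIdempotents p) (f : ι → 𝕜) :
    spectrum 𝕜 (∑ i, f i • p i) ⊆ Set.range f := by
  intro z hz
  by_contra hzf
  have hne : ∀ i, z - f i ≠ 0 := fun i h => hzf ⟨i, (sub_eq_zero.mp h).symm⟩
  have hsub : algebraMap 𝕜 R z - ∑ i, f i • p i = ∑ i, (z - f i) • p i := by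
    simp only [sub_smul, Finset.sum_sub_distrib, ← Finset.smul_sum, hp.complete,
      Algebra.algebraMap_eq_smul_one]
  refine hz (isUnit_iff_exists.mpr ⟨∑ i, (z - f i)⁻¹ • p i, ?_, ?_⟩) <;>
    simp [hsub, sum_smul_mul_sum_smul hp.toOrthogonalIdempotents, hne, hp.complete]

lemma spectrum_sum_smul_subset_insert (hp : OrthogonalIdempotents p) (f : ι → 𝕜) :
    spectrum 𝕜 (∑ i, f i • p i) ⊆ insert 0 (Set.range f) := by
  have h := spectrum_sum_smul_subset_range (CompleteOrthogonalIdempotents.option hp)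
    fun o => o.elim 0 f
  rw [Fintype.sum_option] at h
  simpa [Option.range_eq, Function.comp_def] using h

/-- A matrix unit `v ∈ p i R p j` moves `∑ l i • p i` within its conjugacy class. -/
lemma exists_units_conj_sum_smul_eq (hp : OrthogonalIdempotents p) {l : ι → 𝕜}
    (hl : Function.Injective l) {i j : ι} (hij : i ≠ j) (y : R) (z : 𝕜) :
    ∃ T : Rˣ, Commute (∑ k, p k) T ∧
      T * (∑ k, l k • p k) * ↑T⁻¹ = ∑ k, l k • p k + z • (p i * y * p j) := by
  set u := ∑ k, l k • p k
  set v := p i * y * p j with hv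
  have huv : u * v = l i • v := by
    rw [hv, ← mul_assoc, ← mul_assoc, sum_smul_mul_eq_smul hp, smul_mul_assoc, smul_mul_assoc]
  have hvu : v * u = l j • v := by
    rw [hv, mul_assoc, mul_sum_smul_eq_smul hp, mul_smul_comm]
  have hvv : v * v = 0 := by
    rw [hv, mul_assoc, ← mul_assoc (p j), ← mul_assoc (p j), hp.ortho hij.symm, zero_mul,
      zero_mul, mul_zero]
  have hPv : Commute (∑ k, p k) v := by
    rw [Commute, SemiconjBy, hv, ← mul_assoc, ← mul_assoc, sum_mul_eq hp, mul_assoc _ (p j),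
      hp.mul_sum_of_mem (Finset.mem_univ j)]
  obtain ⟨T, hT, hTu⟩ := exists_units_conj_eq_add_smul huv hvu hvv (z / (l j - l i))
  rw [div_mul_cancel₀ _ (sub_ne_zero.mpr (hl.ne hij.symm))] at hTu
  exact ⟨T, hT ▸ (Commute.one_right _).add_right (hPv.smul_right _), hTu⟩

end OrthogonalIdempotents

section Commutant

variable {A ι : Type*} [NormedRing A] [NormedAlgebra ℂ A] [Fintype ι] {p : ι → A}
  {l : ι → ℂ} {α : A}

lemma eq_zero_or_eq_one_of_eventually_nzSpec_mul_subset (hp : OrthogonalIdempotents p)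
    (hloc : ∀ᶠ u in 𝓝 (∑ i, l i • p i), nzSpec (α * u) ⊆ nzSpec ((∑ i, p i) * u)) {i : ι}
    (hi : p i ≠ 0) {c : ℂ} (hc : α * p i = c • p i) : c = 0 ∨ c = 1 := by
  classical
  by_contra! ⟨hc0, hc1⟩
  have hinj : Function.Injective fun z => c * (l i + z) :=
    (mul_right_injective₀ hc0).comp (add_right_injective _)
  have hfin : ((fun z => c * (l i + z)) ⁻¹' insert 0 (Set.range l)).Finite :=
    ((Set.finite_range l).insert 0).preimage hinj.injOn
  obtain ⟨z, hz, hzl⟩ := ((((tendsto_add_smul_nhds_zero _ (p i)).eventually hloc).filter_mono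
    nhdsWithin_le_nhds).and (nhdsNE_le_cofinite _ hfin.eventually_cofinite_notMem)).exists
  have hsum : ∑ k, l k • p k + z • p i = ∑ k, (l + Pi.single i z : ι → ℂ) k • p k := by
    simp [Pi.add_apply, add_smul, Finset.sum_add_distrib, Pi.single_apply, ite_smul]
  have hmem : c * (l i + z) ∈ nzSpec (α * (∑ k, l k • p k + z • p i)) := by
    refine ⟨mem_spectrum_of_mul_eq_smul hi ?_, fun h => hzl (.inl h)⟩
    rw [mul_assoc, hsum, sum_smul_mul_eq_smul hp, mul_smul_comm, hc, smul_smul, Pi.add_apply,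
      Pi.single_eq_same, mul_comm c]
  have hspec := (hz hmem).1
  rw [hsum, sum_mul_sum_smul hp] at hspec
  obtain h0 | ⟨k, hk⟩ := spectrum_sum_smul_subset_insert hp _ hspec
  · exact hzl (.inl h0)
  · obtain rfl | hki := eq_or_ne k i
    · have hkz : l k + z ≠ 0 := fun h => hzl (.inl (mul_eq_zero_of_right c h))
      exact hc1 (mul_right_cancel₀ hkz (by simpa using hk.symm))
    · exact hzl (.inr ⟨k, by simpa [hki] using hk⟩)

variable [CompleteSpace A]

lemma mul_mul_eq_zero_of_eventually_nzSpec_mul_subset (hss : JacobsonSemisimple A)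
    (hp : OrthogonalIdempotents p) (hl : Function.Injective l)
    (hloc : ∀ᶠ u in 𝓝 (∑ i, l i • p i), nzSpec (α * u) ⊆ nzSpec ((∑ i, p i) * u))
    {i j : ι} (hij : i ≠ j) : p j * α * p i = 0 := by
  refine hss.eq_zero_of_forall_isQuasinilpotent_mul fun y => ?_
  have hq : IsQuasinilpotent (α * (p i * y * p j)) := by
    refine isQuasinilpotent_of_eventually_nzSpec_add_smul_subset (u := α * ∑ k, l k • p k)
      ((Set.finite_range l).insert 0) ?_
    filter_upwards [(tendsto_add_smul_nhds_zero _ (p i * y * p j)).eventually hloc] with z hz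
    obtain ⟨T, -, hT⟩ := exists_units_conj_sum_smul_eq hp hl hij y z
    rw [← mul_smul_comm, ← mul_add]
    calc nzSpec (α * (∑ k, l k • p k + z • (p i * y * p j)))
        ⊆ spectrum ℂ ((∑ k, p k) * (∑ k, l k • p k + z • (p i * y * p j))) :=
          hz.trans Set.sdiff_subset
      _ = spectrum ℂ (∑ k, l k • p k) := by
        rw [mul_add, sum_mul_sum_smul hp, mul_smul_comm, ← mul_assoc, ← mul_assoc, sum_mul_eq hp,
          ← hT, spectrum.units_conjugate]
      _ ⊆ insert 0 (Set.range l) := spectrum_sum_smul_subset_insert hp l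
  rw [← mul_assoc] at hq
  simpa only [mul_assoc] using hq.mul_comm

lemma commute_of_eventually_nzSpec_mul_subset (hss : JacobsonSemisimple A)
    (hp : OrthogonalIdempotents p) (hl : Function.Injective l) (hPα : (∑ i, p i) * α = α)
    (hαP : α * ∑ i, p i = α)
    (hloc : ∀ᶠ u in 𝓝 (∑ i, l i • p i), nzSpec (α * u) ⊆ nzSpec ((∑ i, p i) * u)) (i : ι) :
    Commute α (p i) := by
  have hoff : ∀ k j, k ≠ j → p j * α * p k = 0 := fun _ _ =>
    mul_mul_eq_zero_of_eventually_nzSpec_mul_subset hss hp hl hloc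
  have hleft : α * p i = p i * α * p i := by
    conv_lhs => rw [← hPα]
    rw [Finset.sum_mul, Finset.sum_mul]
    exact Fintype.sum_eq_single i fun j hj => hoff i j hj.symm
  have hright : p i * α = p i * α * p i := by
    conv_lhs => rw [← hαP]
    rw [← mul_assoc, Finset.mul_sum]
    exact Fintype.sum_eq_single i fun j hj => hoff j i hj
  exact hleft.trans hright.symm

/-- The hypothesis persists at nearby points, in particular at those conjugate to `∑ l i • p i`
by a unipotent; `α` therefore also commutes with these. -/
lemma commute_mul_mul_of_eventually_nzSpec_mul_subset (hss : JacobsonSemisimple A)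
    (hp : OrthogonalIdempotents p) (hl : Function.Injective l) (hPα : (∑ i, p i) * α = α)
    (hαP : α * ∑ i, p i = α)
    (hloc : ∀ᶠ u in 𝓝 (∑ i, l i • p i), nzSpec (α * u) ⊆ nzSpec ((∑ i, p i) * u))
    {i j : ι} (hij : i ≠ j) (y : A) : Commute α (p i * y * p j) := by
  have hcu : Commute α (∑ k, l k • p k) := Commute.sum_right _ _ _ fun k _ =>
    (commute_of_eventually_nzSpec_mul_subset hss hp hl hPα hαP hloc k).smul_right _
  obtain ⟨z, hz, hz0⟩ := ((((tendsto_add_smul_nhds_zero _ (p i * y * p j)).eventually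
    hloc.eventually_nhds).filter_mono nhdsWithin_le_nhds).and
    (eventually_mem_nhdsWithin (a := (0 : ℂ)) (s := {0}ᶜ))).exists
  obtain ⟨T, hPT, hT⟩ := exists_units_conj_sum_smul_eq hp hl hij y z
  have hsum : ∑ k, T * p k * ↑T⁻¹ = ∑ k, p k := by
    rw [← Finset.sum_mul, ← Finset.mul_sum, ← hPT.eq, Units.mul_inv_cancel_right]
  have hsum' : ∑ k, l k • (T * p k * ↑T⁻¹) = ∑ k, l k • p k + z • (p i * y * p j) := by
    rw [← hT, Finset.mul_sum, Finset.sum_mul]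
    simp only [mul_smul_comm, smul_mul_assoc]
  have hc : Commute α (∑ k, l k • (T * p k * ↑T⁻¹)) := Commute.sum_right _ _ _ fun k _ =>
    (commute_of_eventually_nzSpec_mul_subset hss (orthogonalIdempotents_units_conj hp T) hl
      (by rw [hsum, hPα]) (by rw [hsum, hαP]) (by rwa [hsum, hsum']) k).smul_right _
  rw [hsum'] at hc
  exact (Commute.smul_right_iff₀ hz0).mp (by simpa using hc.sub_right hcu)

lemma mul_eq_zero_or_mul_eq_of_eventually_nzSpec_mul_subset (hss : JacobsonSemisimple A)
    (hp : OrthogonalIdempotents p) (hmin : ∀ i, IsMinimalIdempotent (p i))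
    (hl : Function.Injective l) (hPα : (∑ i, p i) * α = α) (hαP : α * ∑ i, p i = α)
    (hloc : ∀ᶠ u in 𝓝 (∑ i, l i • p i), nzSpec (α * u) ⊆ nzSpec ((∑ i, p i) * u)) (i : ι) :
    α * p i = 0 ∨ α * p i = p i := by
  have hcomm := commute_of_eventually_nzSpec_mul_subset hss hp hl hPα hαP hloc i
  obtain ⟨c, hc⟩ := (hmin i).exists_mul_mul_eq_smul α
  rw [← hcomm.eq, mul_assoc, (hp.idem i).eq] at hc
  refine (eq_zero_or_eq_one_of_eventually_nzSpec_mul_subset hp hloc (hmin i).ne_zero hc).imp ?_ ?_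
  · rintro rfl
    rw [hc, zero_smul]
  · rintro rfl
    rw [hc, one_smul]

lemma exists_sum_eq_of_eventually_nzSpec_mul_subset (hss : JacobsonSemisimple A)
    (hp : OrthogonalIdempotents p) (hmin : ∀ i, IsMinimalIdempotent (p i))
    (hl : Function.Injective l) (hPα : (∑ i, p i) * α = α) (hαP : α * ∑ i, p i = α)
    (hloc : ∀ᶠ u in 𝓝 (∑ i, l i • p i), nzSpec (α * u) ⊆ nzSpec ((∑ i, p i) * u)) :
    ∃ S : Finset ι, ∑ i ∈ S, p i = α := by
  classical
  refine ⟨Finset.univ.filter fun i => α * p i = p i, ?_⟩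
  conv_rhs => rw [← hαP, Finset.mul_sum]
  rw [Finset.sum_filter]
  refine Finset.sum_congr rfl fun i _ => ?_
  split_ifs with hi
  · exact hi.symm
  · exact ((mul_eq_zero_or_mul_eq_of_eventually_nzSpec_mul_subset hss hp hmin hl hPα hαP hloc
      i).resolve_right hi).symm

lemma commute_sum_mul_mul_sum_of_eventually_nzSpec_mul_subset (hss : JacobsonSemisimple A)
    (hp : OrthogonalIdempotents p) (hmin : ∀ i, IsMinimalIdempotent (p i))
    (hl : Function.Injective l) (hPα : (∑ i, p i) * α = α) (hαP : α * ∑ i, p i = α)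
    (hloc : ∀ᶠ u in 𝓝 (∑ i, l i • p i), nzSpec (α * u) ⊆ nzSpec ((∑ i, p i) * u)) (y : A) :
    Commute α ((∑ i, p i) * y * ∑ i, p i) := by
  rw [Finset.sum_mul, Finset.sum_mul]
  simp only [Finset.mul_sum]
  refine Commute.sum_right _ _ _ fun i _ => Commute.sum_right _ _ _ fun j _ => ?_
  obtain rfl | hij := eq_or_ne i j
  · obtain ⟨c, hc⟩ := (hmin i).exists_mul_mul_eq_smul y
    rw [hc]
    exact (commute_of_eventually_nzSpec_mul_subset hss hp hl hPα hαP hloc i).smul_right c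
  · exact commute_mul_mul_of_eventually_nzSpec_mul_subset hss hp hl hPα hαP hloc hij y

end Commutant

section Enumeration

lemma sum_range_getD_eq_sum_take {M : Type*} [AddCommMonoid M] (xs : List M) (n : ℕ) :
    ∑ i ∈ Finset.range n, xs.getD i 0 = (xs.take n).sum := by
  induction xs generalizing n with
  | nil => simp
  | cons x xs ih => cases n with
    | zero => simp
    | succ n =>
      rw [Finset.sum_range_succ', List.take_succ_cons, List.sum_cons, ← ih, add_comm]
      rfl

lemma exists_sum_range_eq_sum_and_sum_range_eq_sum {ι M : Type*} [AddCommMonoid M] {S L : Finset ι}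
    (hSL : S ⊆ L) (f : ι → M) : ∃ c : ℕ → M, (∀ i < L.card, ∃ j ∈ L, c i = f j) ∧
      ∑ i ∈ Finset.range S.card, c i = ∑ j ∈ S, f j ∧
      ∑ i ∈ Finset.range L.card, c i = ∑ j ∈ L, f j := by
  classical
  set xs := S.toList.map f ++ (L \ S).toList.map f with hxs
  have hlen : xs.length = L.card := by
    simp [hxs, ← Finset.card_sdiff_add_card_eq_card hSL, add_comm]
  refine ⟨fun i => xs.getD i 0, fun i hi => ?_, ?_, ?_⟩
  · rw [← hlen] at hi
    have hmem : xs.getD i 0 ∈ xs := List.getD_eq_getElem xs 0 hi ▸ List.getElem_mem hi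
    have hf : ∀ y ∈ xs, ∃ j ∈ L, y = f j := by
      simp only [hxs, List.mem_append, List.mem_map, Finset.mem_toList, Finset.mem_sdiff]
      rintro _ (⟨j, hj, rfl⟩ | ⟨j, hj, rfl⟩)
      · exact ⟨j, hSL hj, rfl⟩
      · exact ⟨j, hj.1, rfl⟩
    exact hf _ hmem
  · rw [sum_range_getD_eq_sum_take, hxs, List.take_left' (by simp), Finset.sum_map_toList]
  · rw [sum_range_getD_eq_sum_take, ← hlen, List.take_length, hxs, List.sum_append,
      Finset.sum_map_toList, Finset.sum_map_toList, add_comm, Finset.sum_sdiff hSL]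

end Enumeration

section Rank

lemma IsMinimalIdempotent.encard_nzSpec_mul_le_one {A : Type*} [Ring A] [Algebra ℂ A]
    {p : A} (hp : IsMinimalIdempotent p) (b x : A) :
    (nzSpec (x * (p * b))).encard ≤ 1 := by
  obtain ⟨c, hc⟩ := hp.exists_mul_mul_eq_smul (b * x)
  have hspec : nzSpec (x * (p * b)) = nzSpec (c • p) := by
    rw [← hc, nzSpec, spectrum.nonzero_mul_comm, nzSpec, spectrum.nonzero_mul_comm (p * (b * x)),
      ← mul_assoc p p, hp.isIdempotentElem.eq, mul_assoc]
  have hsub : nzSpec (c • p) ⊆ {c} := by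
    have hs := spectrum_sum_smul_subset_insert (ι := Unit)
      (p := fun _ => p) (OrthogonalIdempotents.unique.mpr hp.isIdempotentElem) fun _ => c
    rw [Fintype.sum_unique, Set.range_const] at hs
    exact fun z hz => (hs hz.1).resolve_left hz.2
  rw [hspec]
  exact (Set.encard_mono hsub).trans (Set.encard_singleton c).le

lemma IsMinimalIdempotent.srank_mul_eq_one {A : Type*} [NormedRing A] [NormedAlgebra ℂ A]
    [CompleteSpace A] (hss : JacobsonSemisimple A) {p b : A} (hp : IsMinimalIdempotent p)
    (hpb : p * b ≠ 0) : srank (p * b) = 1 := by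
  refine le_antisymm (iSup_le (hp.encard_nzSpec_mul_le_one b)) ?_
  obtain ⟨x, hx⟩ : ∃ x, ¬ IsQuasinilpotent (p * b * x) := by
    by_contra! h
    exact hpb (hss.eq_zero_of_forall_isQuasinilpotent_mul h)
  have hne : (nzSpec (x * (p * b))).Nonempty :=
    Set.sdiff_nonempty.mpr (mt IsQuasinilpotent.mul_comm hx)
  exact (Set.one_le_encard_iff_nonempty.mpr hne).trans
    (le_iSup (fun x => (nzSpec (x * (p * b))).encard) x)

end Rank

section Reduction

variable {A : Type*} [NormedRing A] [NormedAlgebra ℂ A] [CompleteSpace A] {a b x : A}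

lemma mul_eq_zero_of_eventually_nzSpec_mul_subset (hss : JacobsonSemisimple A)
    (hfin : (spectrum ℂ (b * x)).Finite) (hloc : ∀ᶠ x in 𝓝 x, nzSpec (a * x) ⊆ nzSpec (b * x))
    {y : A} (hy : b * y = 0) : a * y = 0 := by
  refine hss.eq_zero_of_forall_isQuasinilpotent_mul fun z => ?_
  refine isQuasinilpotent_of_eventually_nzSpec_add_smul_subset (u := a * x) hfin ?_
  filter_upwards [(tendsto_add_smul_nhds_zero x (y * z)).eventually hloc] with c hc
  rw [mul_assoc, ← mul_smul_comm, ← mul_add]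
  refine hc.trans ?_
  rw [mul_add, mul_smul_comm, ← mul_assoc, hy, zero_mul, smul_zero, add_zero]
  exact Set.sdiff_subset

lemma mul_left_eq_zero_of_eventually_nzSpec_mul_subset (hss : JacobsonSemisimple A)
    (hfin : (spectrum ℂ (b * x)).Finite) (hloc : ∀ᶠ x in 𝓝 x, nzSpec (a * x) ⊆ nzSpec (b * x))
    {y : A} (hy : y * b = 0) : y * a = 0 := by
  refine hss.eq_zero_of_forall_isQuasinilpotent_mul fun z => ?_
  have hq : IsQuasinilpotent (a * (z * y)) := by
    refine isQuasinilpotent_of_eventually_nzSpec_add_smul_subset (u := a * x) hfin ?_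
    filter_upwards [(tendsto_add_smul_nhds_zero x (z * y)).eventually hloc] with c hc
    rw [← mul_smul_comm, ← mul_add]
    refine hc.trans ?_
    rw [nzSpec, spectrum.nonzero_mul_comm, add_mul, smul_mul_assoc, mul_assoc, hy, mul_zero,
      smul_zero, add_zero, spectrum.nonzero_mul_comm]
    exact Set.sdiff_subset
  rw [← mul_assoc] at hq
  simpa only [mul_assoc] using hq.mul_comm

/-- The perturbation `b (x + z y (1 - P))` keeps every eigenvalue of `b x`, and by maximality it
acquires no others. -/
lemma mul_eq_of_isLocalMax (hss : JacobsonSemisimple A) {P : A}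
    (hfin : (spectrum ℂ (b * x)).Finite)
    (hmax : IsLocalMax (fun y => (nzSpec (b * y)).encard) x)
    (hP : ∀ l ∈ nzSpec (b * x), ∃ p ≠ 0, P * p = p ∧ b * x * p = l • p) : P * b = b := by
  refine (sub_eq_zero.mp (hss.eq_zero_of_forall_isQuasinilpotent_mul fun y => ?_)).symm
  have hq : IsQuasinilpotent (b * (y * (1 - P))) := by
    have hfin' : (nzSpec (b * x)).Finite := hfin.subset Set.sdiff_subset
    refine isQuasinilpotent_of_eventually_nzSpec_add_smul_subset (u := b * x) hfin' ?_
    filter_upwards [(tendsto_add_smul_nhds_zero x (y * (1 - P))).eventually hmax] with z hz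
    rw [mul_add, mul_smul_comm] at hz
    suffices hsub : nzSpec (b * x) ⊆ nzSpec (b * x + z • (b * (y * (1 - P)))) from
      (hfin'.eq_of_subset_of_encard_le hsub hz).ge
    intro l hl
    obtain ⟨p, hp0, hPp, hp⟩ := hP l hl
    refine ⟨mem_spectrum_of_mul_eq_smul hp0 ?_, hl.2⟩
    rw [add_mul, hp, smul_mul_assoc, mul_assoc, mul_assoc, sub_mul, one_mul, hPp, sub_self,
      mul_zero, mul_zero, smul_zero, add_zero]
  rw [← mul_assoc] at hq
  simpa only [← mul_assoc, sub_mul, one_mul] using hq.mul_comm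

lemma exists_orthogonalIdempotents_of_isLocalMax (hss : JacobsonSemisimple A)
    (hfin : (spectrum ℂ (b * x)).Finite)
    (hmax : IsLocalMax (fun y => (nzSpec (b * y)).encard) x) :
    ∃ (n : ℕ) (p : Fin n → A) (l : Fin n → ℂ), OrthogonalIdempotents p ∧
      (∀ i, IsMinimalIdempotent (p i)) ∧ Function.Injective l ∧ (∀ i, l i ≠ 0) ∧
      (∑ i, p i) * b = b ∧ b * x = ∑ i, l i • p i := by
  have hfin' : (nzSpec (b * x)).Finite := hfin.subset Set.sdiff_subset
  obtain ⟨n, l, hl, hrange⟩ := hfin'.fin_param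
  have hmem : ∀ i, l i ∈ nzSpec (b * x) := fun i => hrange ▸ Set.mem_range_self i
  choose p hmin hleft hright using fun i =>
    exists_isMinimalIdempotent_mul_eq_smul hss hfin hmax (hmem i)
  have hp := orthogonalIdempotents_of_mul_eq_smul hl (fun i => (hmin i).isIdempotentElem)
    hright hleft
  have hPb : (∑ i, p i) * b = b := by
    refine mul_eq_of_isLocalMax hss hfin hmax fun c hc => ?_
    obtain ⟨i, rfl⟩ := hrange.ge hc
    exact ⟨p i, (hmin i).ne_zero, sum_mul_eq hp i, hleft i⟩
  refine ⟨n, p, l, hp, hmin, hl, fun i => (hmem i).2, hPb, ?_⟩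
  rw [← hPb, mul_assoc, Finset.sum_mul]
  exact Finset.sum_congr rfl fun i _ => hright i

lemma eventually_nzSpec_mul_mul_subset {R : Type*} [NormedRing R] [NormedAlgebra ℂ R] {a b w x : R}
    (haw : a * w * b = a) (hbw : b * w * b = b)
    (hloc : ∀ᶠ y in 𝓝 x, nzSpec (a * y) ⊆ nzSpec (b * y)) :
    ∀ᶠ u in 𝓝 (b * x), nzSpec (a * w * u) ⊆ nzSpec (b * w * u) := by
  have hcont : Tendsto (fun u => x + w * (u - b * x)) (𝓝 (b * x)) (𝓝 x) :=
    Continuous.tendsto' (by fun_prop) _ _ (by rw [sub_self, mul_zero, add_zero])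
  have heq : ∀ c, c * w * b = c → ∀ u, c * (x + w * (u - b * x)) = c * w * u := fun c hc u => by
    rw [mul_add, ← mul_assoc, mul_sub, ← mul_assoc, hc, add_sub_cancel]
  filter_upwards [hcont.eventually hloc] with u hu
  rwa [heq a haw, heq b hbw] at hu

theorem exists_orthogonalIdempotents_mul_eq (hss : JacobsonSemisimple A)
    (hfin : (spectrum ℂ (b * x)).Finite)
    (hmax : IsLocalMax (fun y => (nzSpec (b * y)).encard) x)
    (hloc : ∀ᶠ y in 𝓝 x, nzSpec (a * y) ⊆ nzSpec (b * y)) :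
    ∃ (n : ℕ) (p : Fin n → A) (S : Finset (Fin n)), OrthogonalIdempotents p ∧
      (∀ i, IsMinimalIdempotent (p i) ∧ p i * b ≠ 0) ∧ (∑ i, p i) * b = b ∧
      (∑ i ∈ S, p i) * b = a ∧ b * (∑ i ∈ S, p i) = a * ∑ i, p i := by
  obtain ⟨n, p, l, hp, hmin, hl, hl0, hPb, hbx⟩ :=
    exists_orthogonalIdempotents_of_isLocalMax hss hfin hmax
  obtain ⟨w, hbw, hwP⟩ := exists_mul_eq_sum_of_mul_eq_sum_smul hp hl0 hbx
  set P := ∑ i, p i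
  have hPa : P * a = a := by
    have h := mul_left_eq_zero_of_eventually_nzSpec_mul_subset hss hfin hloc (y := 1 - P)
      (by rw [sub_mul, one_mul, hPb, sub_self])
    rw [sub_mul, one_mul, sub_eq_zero] at h
    exact h.symm
  have haw : a * w * b = a := by
    have h := mul_eq_zero_of_eventually_nzSpec_mul_subset hss hfin hloc (y := 1 - w * b)
      (by rw [mul_sub, mul_one, ← mul_assoc, hbw, hPb, sub_self])
    rw [mul_sub, mul_one, sub_eq_zero, ← mul_assoc] at h
    exact h.symm
  have hPα : P * (a * w) = a * w := by rw [← mul_assoc, hPa]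
  have hαP : a * w * P = a * w := by rw [mul_assoc, hwP]
  have hloc' : ∀ᶠ u in 𝓝 (∑ i, l i • p i), nzSpec (a * w * u) ⊆ nzSpec (P * u) := by
    simpa only [hbx, hbw] using eventually_nzSpec_mul_mul_subset haw (by rw [hbw, hPb]) hloc
  obtain ⟨S, hS⟩ :=
    exists_sum_eq_of_eventually_nzSpec_mul_subset hss hp hmin hl hPα hαP hloc'
  have hcomm := commute_sum_mul_mul_sum_of_eventually_nzSpec_mul_subset hss hp hmin hl hPα hαP
    hloc' b
  refine ⟨n, p, S, hp, fun i => ⟨hmin i, fun hi => (hmin i).ne_zero ?_⟩, hPb,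
    by rw [hS, haw], ?_⟩
  · calc p i = p i * P := (hp.mul_sum_of_mem (Finset.mem_univ i)).symm
      _ = 0 := by rw [← hbw, ← mul_assoc, hi, zero_mul]
  · rw [hS]
    calc b * (a * w) = P * b * P * (a * w) := by rw [hPb, mul_assoc b, hPα]
      _ = a * w * (P * b * P) := hcomm.eq.symm
      _ = a * P := by rw [hPb, ← mul_assoc, haw]

end Reduction

theorem portion_decomposition_of_nzSpec_subset_on_open_general
    {A : Type*} [NormedRing A] [NormedAlgebra ℂ A] [CompleteSpace A]
    (hss : JacobsonSemisimple A) (N : Set A) (hN : IsOpen N) (hNne : N.Nonempty)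
    (a b : A)
    (hfin : ∀ x ∈ N, (spectrum ℂ (b * x)).Finite)
    (hsub : ∀ x ∈ N, nzSpec (a * x) ⊆ nzSpec (b * x)) :
    a * b = b * a ∧
    (∃ (n k : ℕ), k ≤ n ∧ ∃ c : ℕ → A, (∀ i < n, srank (c i) = 1) ∧
      a = ∑ i ∈ Finset.range k, c i ∧ b = ∑ i ∈ Finset.range n, c i) ∧
    a * (b - a) = 0 ∧ (b - a) * a = 0 := by
  obtain ⟨x, hxN, hmax⟩ := exists_isLocalMax_encard_nzSpec_mul hN hNne hfin
  obtain ⟨n, p, S, hp, hmin, hPb, hSb, hbS⟩ := exists_orthogonalIdempotents_mul_eq hss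
    (hfin x hxN) hmax ((hN.eventually_mem hxN).mono hsub)
  have hcomm : a * b = b * a := by
    rw [← hSb, ← mul_assoc b, hbS, mul_assoc a, hPb, hSb]
  have hsq : a * a = a * b := by
    set e := ∑ i ∈ S, p i
    have hea : e * a = a := by rw [← hSb, ← mul_assoc, hp.isIdempotentElem_sum.eq]
    calc a * a = e * (b * e) * b := by simp only [← hSb, mul_assoc]
      _ = a * b := by rw [hbS, ← mul_assoc, hea, mul_assoc, hPb]
  obtain ⟨c, hc, hca, hcb⟩ :=
    exists_sum_range_eq_sum_and_sum_range_eq_sum S.subset_univ fun i => p i * b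
  rw [← Finset.sum_mul] at hca hcb
  refine ⟨hcomm, ⟨_, _, S.card_le_univ, c, fun i hi => ?_, hSb.symm.trans hca.symm,
    hPb.symm.trans hcb.symm⟩, ?_, ?_⟩
  · obtain ⟨j, -, hj⟩ := hc i hi
    exact hj ▸ (hmin j).1.srank_mul_eq_one hss (hmin j).2
  · rw [mul_sub, hsq, sub_self]
  · rw [sub_mul, hsq, hcomm, sub_self]

theorem portion_decomposition_of_nzSpec_subset_on_open
    {A : Type*} [NormedRing A] [NormOneClass A] [NormedAlgebra ℂ A] [CompleteSpace A]
    (hss : JacobsonSemisimple A) (N : Set A) (hN : IsOpen N) (hNne : N.Nonempty)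
    (a b : A)
    (hfin : ∀ x ∈ N, (spectrum ℂ (b * x)).Finite)
    (hsub : ∀ x ∈ N, nzSpec (a * x) ⊆ nzSpec (b * x)) :
    a * b = b * a ∧
    (a = 0 ∨ ∃ (n k : ℕ), k ≤ n ∧ ∃ c : ℕ → A, (∀ i < n, srank (c i) = 1) ∧
      a = ∑ i ∈ Finset.range k, c i ∧ b = ∑ i ∈ Finset.range n, c i) ∧
    a * (b - a) = 0 ∧ (b - a) * a = 0 :=
  (portion_decomposition_of_nzSpec_subset_on_open_general hss N hN hNne a b hfin hsub).imp_right
    (And.imp_left .inr)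
end
end

section
/- Let A be a complex semisimple unital Banach algebra with Soc A ≠ {0}. Then A is prime if and only if for all nonzero a, b ∈ A the following are equivalent: (i) σ'(ax) ⊆ σ'(bx) for all x ∈ A; (ii) a = b. -/
open Complex

noncomputable section

/-!
Everything happens in an abstract Jacobson semisimple complex algebra. If a left ideal `L ≠ 0`
contains no minimal left ideal, then for every maximal left ideal `m` not containing `L` one has
`L + m = A` and `L ∩ m ≠ 0`: an element `z ∈ L` can be corrected to act on `A / m` as a prescribed
scalar, and the corrections in `L ∩ m` that remain do not disturb this. Repeating the step puts any
number of scalars into the spectrum of one element of `L`, so below an element of finite rank there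
is a minimal left ideal, and by Brauer's lemma it is generated by an idempotent `e`.

For an algebra with such an `e`, spectra of elements of `eAe` detect `e`: testing
`σ'(ax) ⊆ σ'(bx)` on `x = yez` shows that every left inverse `z` of `aye` relative to `e` is one of
`bye` as well, and primeness upgrades this to `aye = bye`. Conversely, if `IJ = 0`, then `a ∈ I` and
`c ∈ J` are orthogonal and `σ'(ax) ⊆ σ'((a + c)x)`, so `c = 0`.
-/

section MinimalLeftIdeal

variable {R : Type*} [Ring R]

theorem exists_mul_eq_of_isAtom {I : Ideal R} (hI : IsAtom I) {x y : R} (hx : x ∈ I) (hx0 : x ≠ 0)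
    (hy : y ∈ I) : ∃ z, z * x = y := by
  have hspan : Ideal.span {x} = I :=
    (hI.le_iff.mp ((Ideal.span_singleton_le_iff_mem I).mpr hx)).resolve_left
      (mt Ideal.span_singleton_eq_bot.mp hx0)
  exact Ideal.mem_span_singleton'.mp (hspan ▸ hy)

/-- Brauer's lemma. -/
theorem exists_isIdempotentElem_span_eq_of_isAtom {I : Ideal R} (hI : IsAtom I) {w v : R}
    (hw : w ∈ I) (hv : v ∈ I) (hwv : w * v ≠ 0) :
    ∃ e : R, IsIdempotentElem e ∧ Ideal.span {e} = I := by
  obtain ⟨z, hz⟩ := exists_mul_eq_of_isAtom hI (I.mul_mem_left w hv) hwv hv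
  have heI : z * w ∈ I := I.mul_mem_left z hw
  have hev : z * w * v = v := by rw [mul_assoc, hz]
  have hidem : IsIdempotentElem (z * w) := by
    by_contra hne
    obtain ⟨u, hu⟩ := exists_mul_eq_of_isAtom hI (I.sub_mem (I.mul_mem_left _ heI) heI)
      (sub_ne_zero.mpr hne) hw
    apply hwv
    rw [← hu, mul_assoc, sub_mul, mul_assoc, hev, hev, sub_self, mul_zero]
  have he0 : z * w ≠ 0 := fun h => hwv (by rw [← hev, h, zero_mul, mul_zero])
  exact ⟨z * w, hidem, (hI.le_iff.mp ((Ideal.span_singleton_le_iff_mem I).mpr heI)).resolve_left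
    (mt Ideal.span_singleton_eq_bot.mp he0)⟩

theorem ne_zero_of_isAtom_span {e : R} (hmin : IsAtom (Ideal.span {e})) : e ≠ 0 :=
  fun h => hmin.1 (Ideal.span_singleton_eq_bot.mpr h)

theorem exists_mul_eq_of_mul_eq_self {e d : R} (hmin : IsAtom (Ideal.span {e}))
    (hde : d * e = d) (hd : d ≠ 0) : ∃ z, z * d = e :=
  exists_mul_eq_of_isAtom hmin (Ideal.mem_span_singleton'.mpr ⟨d, hde⟩) hd
    (Ideal.mem_span_singleton_self e)

theorem exists_left_inv_in_corner {e d : R} (he : IsIdempotentElem e)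
    (hmin : IsAtom (Ideal.span {e})) (hed : e * d = d) (hde : d * e = d) (hd : d ≠ 0) :
    ∃ g, e * g = g ∧ g * e = g ∧ g ≠ 0 ∧ g * d = e := by
  obtain ⟨z, hz⟩ := exists_mul_eq_of_mul_eq_self hmin hde hd
  have hgd : e * z * e * d = e := by rw [mul_assoc, hed, mul_assoc, hz, he.eq]
  refine ⟨e * z * e, by rw [← mul_assoc, ← mul_assoc, he.eq], by rw [mul_assoc, he.eq], ?_, hgd⟩
  intro h
  exact ne_zero_of_isAtom_span hmin (by rw [← hgd, h, zero_mul])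

theorem one_sub_add_mul_one_sub_add {e g d : R} (he : IsIdempotentElem e) (hge : g * e = g)
    (hed : e * d = d) (hgd : g * d = e) : (1 - e + g) * (1 - e + d) = 1 := by
  have : (1 - e + g) * (1 - e + d) = 1 - e - e + e * e + (d - e * d) + (g - g * e) + g * d := by
    noncomm_ring
  rw [this, he.eq, hed, hge, hgd]
  abel

theorem isUnit_one_sub_add {e d : R} (he : IsIdempotentElem e) (hmin : IsAtom (Ideal.span {e}))
    (hed : e * d = d) (hde : d * e = d) (hd : d ≠ 0) : IsUnit (1 - e + d) := by
  obtain ⟨g, heg, hge, hg, hgd⟩ := exists_left_inv_in_corner he hmin hed hde hd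
  obtain ⟨k, -, hke, -, hkg⟩ := exists_left_inv_in_corner he hmin heg hge hg
  have hleft := one_sub_add_mul_one_sub_add he hge hed hgd
  have hleft' := one_sub_add_mul_one_sub_add he hke heg hkg
  exact ⟨⟨_, _, left_inv_eq_right_inv hleft' hleft ▸ hleft', hleft⟩, rfl⟩

theorem eq_zero_of_forall_mul_mul_self_eq_zero (hJ : Ring.jacobson R = ⊥) {a : R}
    (ha : ∀ x, a * x * a = 0) : a = 0 := by
  rw [← Ideal.mem_bot, ← hJ, ← Ideal.jacobson_bot, Ideal.mem_jacobson_iff]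
  refine fun y => ⟨1 - y * a, ?_⟩
  have : (1 - y * a) * y * a + (1 - y * a) - 1 = -(y * (a * y * a)) := by noncomm_ring
  rw [this, ha, mul_zero, neg_zero, Ideal.mem_bot]

theorem exists_isIdempotentElem_span_eq_of_jacobson_eq_bot (hJ : Ring.jacobson R = ⊥)
    {I : Ideal R} (hI : IsAtom I) : ∃ e : R, IsIdempotentElem e ∧ Ideal.span {e} = I := by
  obtain ⟨v, hv, hv0⟩ := (Submodule.ne_bot_iff I).mp hI.1
  obtain ⟨x, hx⟩ : ∃ x, v * x * v ≠ 0 := by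
    by_contra! h
    exact hv0 (eq_zero_of_forall_mul_mul_self_eq_zero hJ h)
  exact exists_isIdempotentElem_span_eq_of_isAtom hI hv (I.mul_mem_left x hv)
    (by rwa [← mul_assoc])

theorem exists_isMaximal_not_le (hJ : Ring.jacobson R = ⊥) {L : Ideal R} (hL : L ≠ ⊥) :
    ∃ m : Ideal R, m.IsMaximal ∧ ¬ L ≤ m := by
  by_contra! h
  refine hL (le_bot_iff.mp ?_)
  rw [← hJ, Ring.jacobson_eq_sInf_isMaximal]
  exact le_sInf h

theorem inf_ne_bot_of_isMaximal {L m : Ideal R} (hL : ¬ IsAtom L) (hm : m.IsMaximal)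
    (hLm : ¬ L ≤ m) : L ⊓ m ≠ ⊥ := fun hbot =>
  have hcompl : IsCompl L m :=
    ⟨disjoint_iff.mpr hbot, (hm.out.not_le_iff_codisjoint.mp hLm).symm⟩
  hL (hcompl.isAtom_iff_isCoatom.mpr hm.out)

end MinimalLeftIdeal

section Spectrum

variable {K A : Type*} [CommRing K] [Ring A] [Algebra K A]

theorem mem_spectrum_of_mem_isMaximal {m : Ideal A} (hm : m.IsMaximal) {c : K} {z : A}
    (h : algebraMap K A c - z ∈ m) : c ∈ spectrum K z :=
  fun hu => hm.ne_top (m.eq_top_of_isUnit_mem h hu)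

theorem exists_forall_sub_mem_isMaximal (hJ : Ring.jacobson A = ⊥) {L : Ideal A} (hL0 : L ≠ ⊥)
    (hL : ∀ I ≤ L, ¬ IsAtom I) (C : Finset K) :
    ∃ z ∈ L, ∃ L' ≤ L, L' ≠ ⊥ ∧
      ∀ c ∈ C, ∃ m : Ideal A, m.IsMaximal ∧ L' ≤ m ∧ algebraMap K A c - z ∈ m := by
  classical
  induction C using Finset.induction_on with
  | empty => exact ⟨0, L.zero_mem, L, le_rfl, hL0, by simp⟩
  | insert d C _ ih =>
    obtain ⟨z, hz, L', hL'L, hL'0, hC⟩ := ih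
    obtain ⟨m, hm, hL'm⟩ := exists_isMaximal_not_le hJ hL'0
    have hsup : L' ⊔ m = ⊤ := (hm.out.not_le_iff_codisjoint.mp hL'm).symm.eq_top
    obtain ⟨y, hy, k, hk, hyk⟩ :=
      Submodule.mem_sup.mp (hsup ▸ Submodule.mem_top : algebraMap K A d - z ∈ L' ⊔ m)
    refine ⟨z + y, L.add_mem hz (hL'L hy), L' ⊓ m, inf_le_left.trans hL'L,
      inf_ne_bot_of_isMaximal (hL L' hL'L) hm hL'm, ?_⟩
    rw [Finset.forall_mem_insert]
    refine ⟨⟨m, hm, inf_le_right, ?_⟩, fun c hc => ?_⟩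
    · rwa [← sub_sub, ← hyk, add_sub_cancel_left]
    · obtain ⟨m', hm', hL'm', hzc⟩ := hC c hc
      exact ⟨m', hm', inf_le_left.trans hL'm', sub_sub _ z y ▸ m'.sub_mem hzc (hL'm' hy)⟩

theorem exists_isAtom_le_of_spectrum_encard_le [Infinite K] (hJ : Ring.jacobson A = ⊥)
    {L : Ideal A} (hL0 : L ≠ ⊥) {n : ℕ} (hn : ∀ z ∈ L, (spectrum K z).encard ≤ n) :
    ∃ I ≤ L, IsAtom I := by
  by_contra! hL
  obtain ⟨C, hC⟩ := Infinite.exists_subset_card_eq K (n + 1)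
  obtain ⟨z, hz, _, -, -, hzC⟩ := exists_forall_sub_mem_isMaximal hJ hL0 hL C
  have hsub : (C : Set K) ⊆ spectrum K z := by
    intro c hc
    obtain ⟨m, hm, -, hmem⟩ := hzC c hc
    exact mem_spectrum_of_mem_isMaximal hm hmem
  have hle := (Set.encard_le_encard hsub).trans (hn z hz)
  rw [Set.encard_coe_eq_coe_finsetCard, hC] at hle
  exact absurd (Nat.cast_le.mp hle) (Nat.not_succ_le_self n)

theorem one_mem_spectrum_of_isIdempotentElem {e : A} (he : IsIdempotentElem e) (he0 : e ≠ 0) :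
    (1 : K) ∈ spectrum K e := by
  rw [spectrum.mem_iff, map_one]
  intro hu
  exact he0 ((hu.mul_right_eq_zero).mp he.one_sub_mul_self)

theorem eq_of_one_mem_spectrum_of_mem_corner {e w : A} (he : IsIdempotentElem e)
    (hmin : IsAtom (Ideal.span {e})) (hew : e * w = w) (hwe : w * e = w)
    (h : (1 : K) ∈ spectrum K w) : w = e := by
  by_contra hne
  rw [spectrum.mem_iff, map_one] at h
  have hu : IsUnit (1 - e + (e - w)) :=
    isUnit_one_sub_add he hmin (by rw [mul_sub, he.eq, hew]) (by rw [sub_mul, he.eq, hwe])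
      (sub_ne_zero.mpr (Ne.symm hne))
  exact h (by rwa [sub_add_sub_cancel] at hu)

end Spectrum

section NonzeroSpectrum

variable {A : Type*} [Ring A] [Algebra ℂ A]

theorem nzSpec_mul_comm (x y : A) : nzSpec (x * y) = nzSpec (y * x) :=
  spectrum.nonzero_mul_comm x y

theorem nzSpec_zero : nzSpec (0 : A) = ∅ := by
  refine Set.eq_empty_of_forall_notMem fun c ⟨hc, hc0⟩ => hc ?_
  rw [spectrum.mem_resolventSet_iff, sub_zero]
  exact (IsUnit.mk0 c hc0).map (algebraMap ℂ A)

theorem zero_mem_socle : (0 : A) ∈ socle A := by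
  simp [socle, srank, nzSpec_zero]

theorem nzSpec_subset_nzSpec_add {x y : A} (hxy : x * y = 0) (hyx : y * x = 0) :
    nzSpec x ⊆ nzSpec (x + y) := by
  rintro c ⟨hc, hc0⟩
  refine ⟨fun hu => hc ?_, hc0⟩
  have hcu : IsUnit (algebraMap ℂ A c) := (IsUnit.mk0 c hc0).map (algebraMap ℂ A)
  have hcx : algebraMap ℂ A c * x = x * algebraMap ℂ A c := Algebra.commutes c x
  have hcy : algebraMap ℂ A c * y = y * algebraMap ℂ A c := Algebra.commutes c y
  have hprod : (algebraMap ℂ A c - x) * (algebraMap ℂ A c - y) =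
      algebraMap ℂ A c * (algebraMap ℂ A c - (x + y)) := by
    rw [sub_mul, mul_sub, mul_sub, mul_sub, mul_add, hxy, hcx]
    abel
  have hprod' : (algebraMap ℂ A c - y) * (algebraMap ℂ A c - x) =
      algebraMap ℂ A c * (algebraMap ℂ A c - (x + y)) := by
    rw [sub_mul, mul_sub, mul_sub, mul_sub, mul_add, hyx, hcy]
    abel
  have hcomm : Commute (algebraMap ℂ A c - x) (algebraMap ℂ A c - y) := hprod.trans hprod'.symm
  exact (hcomm.isUnit_mul_iff.mp (hprod ▸ hcu.mul hu)).1

theorem exists_isIdempotentElem_isAtom_span_of_mem_socle (hJ : Ring.jacobson A = ⊥) {s : A}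
    (hs : s ∈ socle A) (hs0 : s ≠ 0) :
    ∃ e : A, IsIdempotentElem e ∧ IsAtom (Ideal.span {e}) := by
  obtain ⟨n, hn⟩ := ENat.ne_top_iff_exists.mp hs
  have hspec : ∀ z ∈ Ideal.span {s}, (spectrum ℂ z).encard ≤ (n + 1 : ℕ) := by
    intro z hz
    obtain ⟨x, rfl⟩ := Ideal.mem_span_singleton'.mp hz
    calc (spectrum ℂ (x * s)).encard
        ≤ (nzSpec (x * s)).encard + ({0} : Set ℂ).encard :=
          Set.encard_le_encard_sdiff_add_encard _ _
      _ ≤ srank s + 1 := by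
          rw [Set.encard_singleton]
          gcongr
          exact le_iSup (fun x : A => (nzSpec (x * s)).encard) x
      _ = (n + 1 : ℕ) := by rw [← hn]; rfl
  obtain ⟨I, -, hI⟩ := exists_isAtom_le_of_spectrum_encard_le hJ
    (mt Ideal.span_singleton_eq_bot.mp hs0) hspec
  obtain ⟨e, he, rfl⟩ := exists_isIdempotentElem_span_eq_of_jacobson_eq_bot hJ hI
  exact ⟨e, he, hI⟩

theorem mul_eq_of_nzSpec_mul_subset {a b e y z : A} (he : IsIdempotentElem e)
    (hmin : IsAtom (Ideal.span {e})) (hsub : ∀ x, nzSpec (a * x) ⊆ nzSpec (b * x))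
    (hz : z * (a * y * e) = e) : e * z * (b * y * e) = e := by
  have hidem : IsIdempotentElem (a * (y * e * z)) := by
    calc a * (y * e * z) * (a * (y * e * z))
        = a * y * e * (z * (a * y * e)) * z := by simp only [mul_assoc]
      _ = a * y * (e * e) * z := by rw [hz, mul_assoc (a * y)]
      _ = a * (y * e * z) := by rw [he.eq]; simp only [mul_assoc]
  have hne : a * (y * e * z) ≠ 0 := by
    intro h
    refine ne_zero_of_isAtom_span hmin ?_
    calc e = z * (a * y * e) * (z * (a * y * e)) := by rw [hz, he.eq]
      _ = z * (a * (y * e * z)) * (a * y * e) := by simp only [mul_assoc]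
      _ = 0 := by rw [h, mul_zero, zero_mul]
  have hone : (1 : ℂ) ∈ nzSpec (b * (y * e * z)) :=
    hsub _ ⟨one_mem_spectrum_of_isIdempotentElem hidem hne, one_ne_zero⟩
  have hsplit : b * (y * e * z) = b * y * e * (e * z) := by
    rw [← mul_assoc (b * y * e), mul_assoc (b * y) e e, he.eq]
    simp only [mul_assoc]
  rw [hsplit, nzSpec_mul_comm] at hone
  refine eq_of_one_mem_spectrum_of_mem_corner he hmin ?_ ?_ hone.1
  · rw [← mul_assoc, ← mul_assoc e, he.eq]
  · rw [mul_assoc, mul_assoc (b * y), he.eq]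

end NonzeroSpectrum

theorem JacobsonSemisimple.ringJacobson_eq_bot {R : Type*} [Ring R] (h : JacobsonSemisimple R) :
    Ring.jacobson R = ⊥ := by
  rw [← Ideal.jacobson_bot, ← TwoSidedIdeal.bot_asIdeal, ← TwoSidedIdeal.asIdeal_jacobson, h]

section Span

variable {R : Type*} [Ring R] {a b : R}

theorem mul_mul_eq_zero_of_mem_span_left (h : ∀ x, a * x * b = 0) {u : R}
    (hu : u ∈ TwoSidedIdeal.span {a}) : ∀ x, u * x * b = 0 := by
  induction hu using TwoSidedIdeal.span_induction with
  | mem _ hmem => exact Set.mem_singleton_iff.mp hmem ▸ h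
  | zero => simp only [zero_mul, forall_const]
  | add u v _ _ hu hv => intro x; rw [add_mul, add_mul, hu, hv, add_zero]
  | neg u _ hu => intro x; rw [neg_mul, neg_mul, hu, neg_zero]
  | left_absorb c u _ hu => intro x; rw [mul_assoc c, mul_assoc c, hu, mul_zero]
  | right_absorb c u _ hu => intro x; rw [mul_assoc u, hu]

theorem mul_mul_eq_zero_of_mem_span_right (h : ∀ x, a * x * b = 0) {u : R}
    (hu : u ∈ TwoSidedIdeal.span {b}) : ∀ x, a * x * u = 0 := by
  induction hu using TwoSidedIdeal.span_induction with
  | mem _ hmem => exact Set.mem_singleton_iff.mp hmem ▸ h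
  | zero => simp only [mul_zero, forall_const]
  | add u v _ _ hu hv => intro x; rw [mul_add, hu, hv, add_zero]
  | neg u _ hu => intro x; rw [mul_neg, hu, neg_zero]
  | left_absorb c u _ hu => intro x; rw [← mul_assoc, mul_assoc a, hu]
  | right_absorb c u _ hu => intro x; rw [← mul_assoc, hu, zero_mul]

end Span

namespace IsPrimeAlgebra

theorem eq_zero_or_eq_zero {R : Type*} [Ring R] (hp : IsPrimeAlgebra R) {a b : R}
    (h : ∀ x, a * x * b = 0) : a = 0 ∨ b = 0 := by
  by_contra! hne
  have hspan : ∀ c : R, c ≠ 0 → TwoSidedIdeal.span {c} ≠ ⊥ := fun c hc hbot =>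
    hc ((TwoSidedIdeal.mem_bot R).mp (hbot ▸ TwoSidedIdeal.subset_span rfl))
  obtain ⟨x, hx, y, hy, hxy⟩ := hp _ _ (hspan a hne.1) (hspan b hne.2)
  refine hxy ?_
  rw [← mul_one x]
  exact mul_mul_eq_zero_of_mem_span_right (mul_mul_eq_zero_of_mem_span_left h hx) hy 1

theorem eq_of_forall_left_inv {R : Type*} [Ring R] (hp : IsPrimeAlgebra R) {e α β z : R}
    (he0 : e ≠ 0) (hα : α * e = α) (hz : z * α = e) (h : ∀ x, x * α = e → e * x * β = e) :
    α = β := by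
  have hkill : ∀ x, e * x * ((1 - α * z) * β) = 0 := by
    intro x
    have hx : (z + x * (1 - α * z)) * α = e := by
      rw [add_mul, mul_assoc x, sub_mul, mul_assoc α, hz, hα, one_mul, sub_self, mul_zero, add_zero]
    have hsum := h _ hx
    rw [mul_add, add_mul, h z hz, add_eq_left] at hsum
    simpa only [mul_assoc] using hsum
  have hβ := (hp.eq_zero_or_eq_zero hkill).resolve_left he0
  rw [sub_mul, one_mul, sub_eq_zero] at hβ
  calc α = α * (e * z * β) := by rw [h z hz, hα]
    _ = α * e * z * β := by simp only [mul_assoc]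
    _ = β := by rw [hα, ← hβ]

variable {A : Type*} [Ring A] [Algebra ℂ A]

theorem eq_of_nzSpec_mul_subset (hp : IsPrimeAlgebra A) {e : A} (he : IsIdempotentElem e)
    (hmin : IsAtom (Ideal.span {e})) {a b : A} (ha : a ≠ 0)
    (hsub : ∀ x, nzSpec (a * x) ⊆ nzSpec (b * x)) : a = b := by
  have he0 : e ≠ 0 := ne_zero_of_isAtom_span hmin
  have heq : ∀ y, a * y * e ≠ 0 → a * y * e = b * y * e := by
    intro y hy
    have hye : a * y * e * e = a * y * e := by rw [mul_assoc, he.eq]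
    obtain ⟨z, hz⟩ := exists_mul_eq_of_mul_eq_self hmin hye hy
    exact hp.eq_of_forall_left_inv he0 hye hz fun x => mul_eq_of_nzSpec_mul_subset he hmin hsub
  obtain ⟨y₀, hy₀⟩ : ∃ y, a * y * e ≠ 0 := by
    by_contra! h
    exact (hp.eq_zero_or_eq_zero h).elim ha he0
  refine sub_eq_zero.mp ((hp.eq_zero_or_eq_zero fun y => ?_).resolve_right he0)
  rw [sub_mul, sub_mul, sub_eq_zero]
  by_cases hy : a * y * e = 0
  · have hadd : a * (y + y₀) * e = a * y₀ * e := by rw [mul_add, add_mul, hy, zero_add]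
    have hshift := heq (y + y₀) (hadd ▸ hy₀)
    rw [hadd, heq y₀ hy₀, mul_add, add_mul, right_eq_add] at hshift
    rw [hy, hshift]
  · exact heq y hy

end IsPrimeAlgebra

theorem inf_eq_bot_of_forall_mul_eq_zero {R : Type*} [Ring R] (hJ : Ring.jacobson R = ⊥)
    {I J : TwoSidedIdeal R} (hIJ : ∀ x ∈ I, ∀ y ∈ J, x * y = 0) : I ⊓ J = ⊥ :=
  eq_bot_iff.mpr fun x ⟨hxI, hxJ⟩ => (TwoSidedIdeal.mem_bot R).mpr <|
    eq_zero_of_forall_mul_mul_self_eq_zero hJ fun y => hIJ _ (I.mul_mem_right x y hxI) x hxJ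

theorem exists_mem_ne_zero_of_ne_bot {R : Type*} [Ring R] {I : TwoSidedIdeal R} (hI : I ≠ ⊥) :
    ∃ x ∈ I, x ≠ 0 := by
  by_contra! h
  exact hI (eq_bot_iff.mpr fun x hx => (TwoSidedIdeal.mem_bot R).mpr (h x hx))

theorem isPrimeAlgebra_of_nzSpec_mul_subset_imp_eq {A : Type*} [Ring A] [Algebra ℂ A]
    (hJ : Ring.jacobson A = ⊥)
    (h : ∀ a b : A, a ≠ 0 → b ≠ 0 → (∀ x, nzSpec (a * x) ⊆ nzSpec (b * x)) → a = b) :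
    IsPrimeAlgebra A := by
  intro I J hI hJ₀
  by_contra! hIJ
  have hinf : ∀ x ∈ I, x ∈ J → x = 0 := fun x hxI hxJ => by
    rw [← TwoSidedIdeal.mem_bot A, ← inf_eq_bot_of_forall_mul_eq_zero hJ hIJ]
    exact ⟨hxI, hxJ⟩
  have hJI : ∀ y ∈ J, ∀ x ∈ I, y * x = 0 := fun y hy x hx =>
    hinf _ (I.mul_mem_left y x hx) (J.mul_mem_right y x hy)
  obtain ⟨a, ha, ha0⟩ := exists_mem_ne_zero_of_ne_bot hI
  obtain ⟨c, hc, hc0⟩ := exists_mem_ne_zero_of_ne_bot hJ₀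
  have hac : a + c ≠ 0 := fun hsum =>
    ha0 (hinf a ha (eq_neg_of_add_eq_zero_left hsum ▸ J.neg_mem hc))
  have hsub : ∀ x, nzSpec (a * x) ⊆ nzSpec ((a + c) * x) := by
    intro x
    have hax := I.mul_mem_right a x ha
    have hcx := J.mul_mem_right c x hc
    rw [add_mul]
    exact nzSpec_subset_nzSpec_add (hIJ _ hax _ hcx) (hJI _ hcx _ hax)
  exact hc0 (left_eq_add.mp (h a (a + c) ha0 hac hsub))

theorem prime_iff_nzSpec_subset_uniqueness_general {A : Type*} [Ring A] [Algebra ℂ A]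
    (hss : JacobsonSemisimple A) (hsoc : socle A ≠ {0}) :
    IsPrimeAlgebra A ↔
      ∀ a b : A, a ≠ 0 → b ≠ 0 →
        ((∀ x : A, nzSpec (a * x) ⊆ nzSpec (b * x)) ↔ a = b) := by
  have hJ := hss.ringJacobson_eq_bot
  obtain ⟨s, hs, hs0⟩ : ∃ s ∈ socle A, s ≠ 0 := by
    by_contra! h
    exact hsoc (Set.eq_singleton_iff_unique_mem.mpr ⟨zero_mem_socle, h⟩)
  obtain ⟨e, he, hmin⟩ := exists_isIdempotentElem_isAtom_span_of_mem_socle hJ hs hs0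
  refine ⟨fun hp a b ha _ => ⟨hp.eq_of_nzSpec_mul_subset he hmin ha, ?_⟩, fun h => ?_⟩
  · rintro rfl x
    exact subset_rfl
  · exact isPrimeAlgebra_of_nzSpec_mul_subset_imp_eq hJ fun a b ha hb => (h a b ha hb).mp

theorem prime_iff_nzSpec_subset_uniqueness
    {A : Type*} [NormedRing A] [NormOneClass A] [NormedAlgebra ℂ A] [CompleteSpace A]
    (hss : JacobsonSemisimple A) (hsoc : socle A ≠ {0}) :
    IsPrimeAlgebra A ↔
      ∀ a b : A, a ≠ 0 → b ≠ 0 →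
        ((∀ x : A, nzSpec (a * x) ⊆ nzSpec (b * x)) ↔ a = b) := by
  exact prime_iff_nzSpec_subset_uniqueness_general hss hsoc
end
end
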